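/- Let ψ : C → D be a quasi-isomorphism of 2-reduced dg coalgebras over ℚ. Then the induced morphism of cobar constructions Ωψ : ΩC → ΩD is a quasi-isomorphism of dg algebras. -/

import Mathlib

open scoped TensorProduct

noncomputable section

/-- A homologically graded differential graded `ℚ`-vector space (chain complex of
`ℚ`-vector spaces presented as a graded module with a degree `-1` square-zero differential). -/
structure DGVect : Type 1 where
  carrier : Type
  [isAddCommGroup : AddCommGroup carrier]
  [isModule : Module ℚ carrier]
  grading : ℤ → Submodule ℚ carrier
  [isDecomp : DirectSum.Decomposition grading]
  d : carrier →ₗ[ℚ] carrier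
  d_mem : ∀ (n : ℤ), ∀ x ∈ grading n, d x ∈ grading (n - 1)
  d_sq : d.comp d = 0

attribute [instance] DGVect.isAddCommGroup DGVect.isModule DGVect.isDecomp

/-- The operator acting on the degree `n` graded component by `(-1)^(k*n)`. -/
def signOpOf {V : Type} [AddCommGroup V] [Module ℚ V] (g : ℤ → Submodule ℚ V)
    [DirectSum.Decomposition g] (k : ℤ) : V →ₗ[ℚ] V :=
  (DirectSum.toModule ℚ ℤ V fun n => ((-1 : ℚ) ^ (k * n)) • (g n).subtype).comp
    (DirectSum.decomposeLinearEquiv g).toLinearMap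

/-- The Koszul parity operator, acting by `(-1)^n` in degree `n`. -/
def parityOf {V : Type} [AddCommGroup V] [Module ℚ V] (g : ℤ → Submodule ℚ V)
    [DirectSum.Decomposition g] : V →ₗ[ℚ] V := signOpOf g 1

def DGVect.parity (V : DGVect) : V.carrier →ₗ[ℚ] V.carrier := parityOf V.grading

/-- A graded object is bounded below if it vanishes in all sufficiently negative degrees. -/
def DGVect.BoundedBelow (V : DGVect) : Prop := ∃ b : ℤ, ∀ n : ℤ, n < b → V.grading n = ⊥

/-- The Koszul signed braiding `v ⊗ w ↦ (-1)^{|v||w|} w ⊗ v` of graded vector spaces. -/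
def kSwapOf {V W : Type} [AddCommGroup V] [Module ℚ V] [AddCommGroup W] [Module ℚ W]
    (gV : ℤ → Submodule ℚ V) (gW : ℤ → Submodule ℚ W)
    [DirectSum.Decomposition gV] [DirectSum.Decomposition gW] :
    V ⊗[ℚ] W →ₗ[ℚ] W ⊗[ℚ] V :=
  TensorProduct.lift
    ((DirectSum.toModule ℚ ℤ (W →ₗ[ℚ] W ⊗[ℚ] V) (fun i =>
        (((DirectSum.toModule ℚ ℤ (V →ₗ[ℚ] W ⊗[ℚ] V) (fun j =>
              ((-1 : ℚ) ^ (i * j)) • ((TensorProduct.mk ℚ W V).comp (gW j).subtype))).comp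
            (DirectSum.decomposeLinearEquiv gW).toLinearMap).flip).comp
          (gV i).subtype)).comp
      (DirectSum.decomposeLinearEquiv gV).toLinearMap)

/-- The degree `n` part of the tensor product grading:
the span of the homogeneous tensors of total degree `n`. -/
def tensorGrading {V W : Type} [AddCommGroup V] [Module ℚ V] [AddCommGroup W] [Module ℚ W]
    (gV : ℤ → Submodule ℚ V) (gW : ℤ → Submodule ℚ W) (n : ℤ) : Submodule ℚ (V ⊗[ℚ] W) :=
  ⨆ p : {p : ℤ × ℤ // p.1 + p.2 = n},
    LinearMap.range (TensorProduct.map (gV p.1.1).subtype (gW p.1.2).subtype)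

/-- `f` is a quasi-isomorphism from the complex `(V, dV)` to the complex `(W, dW)`:
it induces a bijection on homology (`ker d / im d`). -/
def IsQuasiIso {V W : Type} [AddCommGroup V] [Module ℚ V] [AddCommGroup W] [Module ℚ W]
    (dV : V →ₗ[ℚ] V) (dW : W →ₗ[ℚ] W) (f : V →ₗ[ℚ] W) : Prop :=
  (∀ x : V, dV x = 0 → (∃ y, f x = dW y) → ∃ z, x = dV z) ∧
  (∀ w : W, dW w = 0 → ∃ x, dV x = 0 ∧ ∃ y, w - f x = dW y)

/-- A differential graded algebra over `ℚ`. -/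
structure DGAlgebra extends DGVect where
  mul : carrier →ₗ[ℚ] carrier →ₗ[ℚ] carrier
  one : carrier
  one_mem : one ∈ grading 0
  mul_mem : ∀ (i j : ℤ) (x y : carrier), x ∈ grading i → y ∈ grading j →
    mul x y ∈ grading (i + j)
  mul_assoc' : ∀ x y z : carrier, mul (mul x y) z = mul x (mul y z)
  one_mul' : ∀ x : carrier, mul one x = x
  mul_one' : ∀ x : carrier, mul x one = x
  leibniz : ∀ (i : ℤ) (x y : carrier), x ∈ grading i →
    d (mul x y) = mul (d x) y + ((-1 : ℚ) ^ i) • mul x (d y)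

/-- The multiplication of a dg algebra as a map out of the tensor product. -/
def DGAlgebra.mulMap (A : DGAlgebra) : A.carrier ⊗[ℚ] A.carrier →ₗ[ℚ] A.carrier :=
  TensorProduct.lift A.mul

/-- A dg algebra is connective if it is concentrated in non-negative degrees. -/
def DGAlgebra.Connective (A : DGAlgebra) : Prop := ∀ n : ℤ, n < 0 → A.grading n = ⊥

/-- A (coassociative counital) differential graded coalgebra over `ℚ`,
non-negatively graded. -/
structure DGCoalgebra extends DGVect where
  comul : carrier →ₗ[ℚ] carrier ⊗[ℚ] carrier
  counit : carrier →ₗ[ℚ] ℚ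
  nonneg : ∀ n : ℤ, n < 0 → grading n = ⊥
  comul_mem : ∀ (n : ℤ), ∀ x ∈ grading n, comul x ∈ tensorGrading grading grading n
  counit_zero : ∀ (n : ℤ), n ≠ 0 → ∀ x ∈ grading n, counit x = 0
  coassoc : (TensorProduct.assoc ℚ carrier carrier carrier).toLinearMap.comp
      ((TensorProduct.map comul LinearMap.id).comp comul)
      = (TensorProduct.map LinearMap.id comul).comp comul
  counit_comul_left : (TensorProduct.lid ℚ carrier).toLinearMap.comp
      ((TensorProduct.map counit LinearMap.id).comp comul) = LinearMap.id
  counit_comul_right : (TensorProduct.rid ℚ carrier).toLinearMap.comp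
      ((TensorProduct.map LinearMap.id counit).comp comul) = LinearMap.id
  comul_chain : comul.comp d
      = (TensorProduct.map d LinearMap.id + TensorProduct.map (parityOf grading) d).comp comul
  counit_chain : counit.comp d = 0

/-- Cocommutativity: the comultiplication is invariant under the Koszul signed twist. -/
def DGCoalgebra.Cocomm (C : DGCoalgebra) : Prop :=
  (kSwapOf C.grading C.grading).comp C.comul = C.comul

/-- A coaugmented dg coalgebra: a dg coalgebra with a coaugmentation `η : ℚ → C`,
recorded by the grouplike element `one = η 1` in degree `0`. -/
structure CoaugDGCoalgebra extends DGCoalgebra where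
  one : carrier
  one_mem : one ∈ grading 0
  counit_one : counit one = 1
  comul_one : comul one = one ⊗ₜ[ℚ] one

/-- A coaugmented dg coalgebra is 2-reduced if `C₀ = ℚ` (spanned by the coaugmentation)
and `C₁ = 0`. -/
def CoaugDGCoalgebra.TwoReduced (C : CoaugDGCoalgebra) : Prop :=
  C.grading 0 = Submodule.span ℚ {C.one} ∧ C.grading 1 = ⊥

/-- A twisting chain `τ : C ⇝ A`: a degree `-1` linear map satisfying
`d(τc) = -τ(dc) - (-1)^{|c₍₀₎|} τ(c₍₀₎)·τ(c₍₁₎)`. -/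
structure TwistingChain (C : DGCoalgebra) (A : DGAlgebra) where
  toFun : C.carrier →ₗ[ℚ] A.carrier
  mem : ∀ (n : ℤ), ∀ x ∈ C.grading n, toFun x ∈ A.grading (n - 1)
  twist : A.d.comp toFun + toFun.comp C.d
      + A.mulMap.comp ((TensorProduct.map (toFun.comp (parityOf C.grading)) toFun).comp C.comul)
      = 0

/-- A left dg module over a dg algebra. -/
structure DGModule (A : DGAlgebra) extends DGVect where
  smul : A.carrier →ₗ[ℚ] carrier →ₗ[ℚ] carrier
  smul_mem : ∀ (i j : ℤ) (a : A.carrier) (x : carrier), a ∈ A.grading i → x ∈ grading j →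
    smul a x ∈ grading (i + j)
  one_smul' : ∀ x : carrier, smul A.one x = x
  mul_smul' : ∀ (a b : A.carrier) (x : carrier), smul (A.mul a b) x = smul a (smul b x)
  leibniz : ∀ (i : ℤ) (a : A.carrier) (x : carrier), a ∈ A.grading i →
    d (smul a x) = smul (A.d a) x + ((-1 : ℚ) ^ i) • smul a (d x)

/-- The action of a dg module as a map out of the tensor product. -/
def DGModule.actionMap {A : DGAlgebra} (M : DGModule A) :
    A.carrier ⊗[ℚ] M.carrier →ₗ[ℚ] M.carrier := TensorProduct.lift M.smul

/-- A left dg comodule over a dg coalgebra. -/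
structure DGComodule (C : DGCoalgebra) extends DGVect where
  coact : carrier →ₗ[ℚ] C.carrier ⊗[ℚ] carrier
  coact_mem : ∀ (n : ℤ), ∀ x ∈ grading n, coact x ∈ tensorGrading C.grading grading n
  coassoc : (TensorProduct.assoc ℚ C.carrier C.carrier carrier).toLinearMap.comp
      ((TensorProduct.map C.comul LinearMap.id).comp coact)
      = (TensorProduct.map LinearMap.id coact).comp coact
  counit_coact : (TensorProduct.lid ℚ carrier).toLinearMap.comp
      ((TensorProduct.map C.counit LinearMap.id).comp coact) = LinearMap.id
  coact_chain : coact.comp d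
      = (TensorProduct.map C.d LinearMap.id + TensorProduct.map (parityOf C.grading) d).comp coact

/-- Morphisms of dg modules: degree `0` graded chain maps commuting with the action. -/
def IsModuleHom (A : DGAlgebra) (M M' : DGModule A)
    (g : M.carrier →ₗ[ℚ] M'.carrier) : Prop :=
  (∀ (n : ℤ), ∀ x ∈ M.grading n, g x ∈ M'.grading n) ∧
  g.comp M.d = M'.d.comp g ∧
  g.comp M.actionMap = M'.actionMap.comp (TensorProduct.map LinearMap.id g)

/-- Morphisms of dg comodules: degree `0` graded chain maps commuting with the coaction. -/
def IsComoduleHom (C : DGCoalgebra) (N N' : DGComodule C)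
    (f : N.carrier →ₗ[ℚ] N'.carrier) : Prop :=
  (∀ (n : ℤ), ∀ x ∈ N.grading n, f x ∈ N'.grading n) ∧
  f.comp N.d = N'.d.comp f ∧
  (TensorProduct.map LinearMap.id f).comp N.coact = N'.coact.comp f

/-- The `A`-action on a twisted extension `A ⊗_τ N`: multiplication on the first factor. -/
def extAction (A : DGAlgebra) (N : Type) [AddCommGroup N] [Module ℚ N] :
    A.carrier ⊗[ℚ] (A.carrier ⊗[ℚ] N) →ₗ[ℚ] A.carrier ⊗[ℚ] N :=
  (TensorProduct.map A.mulMap LinearMap.id).comp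
    (TensorProduct.assoc ℚ A.carrier A.carrier N).symm.toLinearMap

/-- The differential of the twisted extension `A ⊗_τ N`:
`d(a ⊗ n) = da ⊗ n + (-1)^{|a|} a ⊗ dn - (-1)^{|a|} a·τ(n₍₀₎) ⊗ n₍₁₎`
for a `C`-comodule `(N, dN, ρ)`. -/
def extDiff (C : DGCoalgebra) (A : DGAlgebra) (τ : TwistingChain C A)
    (N : Type) [AddCommGroup N] [Module ℚ N]
    (dN : N →ₗ[ℚ] N) (ρ : N →ₗ[ℚ] C.carrier ⊗[ℚ] N) :
    A.carrier ⊗[ℚ] N →ₗ[ℚ] A.carrier ⊗[ℚ] N :=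
  TensorProduct.map A.d LinearMap.id + TensorProduct.map (parityOf A.grading) dN
    - (TensorProduct.map
        (A.mulMap.comp (TensorProduct.map (parityOf A.grading) τ.toFun)) LinearMap.id).comp
        ((TensorProduct.assoc ℚ A.carrier C.carrier N).symm.toLinearMap.comp
          (TensorProduct.map LinearMap.id ρ))

/-- The `C`-coaction on a twisted coextension `C ⊗^τ M`, namely `Δ ⊗ id`. -/
def coextCoact (C : DGCoalgebra) (M : Type) [AddCommGroup M] [Module ℚ M] :
    C.carrier ⊗[ℚ] M →ₗ[ℚ] C.carrier ⊗[ℚ] (C.carrier ⊗[ℚ] M) :=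
  (TensorProduct.assoc ℚ C.carrier C.carrier M).toLinearMap.comp
    (TensorProduct.map C.comul LinearMap.id)

/-- The differential of the twisted coextension `C ⊗^τ M`, expressed in terms of the map
`tact : C ⊗ M → M`, `c ⊗ m ↦ τ(c)·m`:
`d(c ⊗ m) = dc ⊗ m + (-1)^{|c|} c ⊗ dm + (-1)^{|c₍₀₎|} c₍₀₎ ⊗ τ(c₍₁₎)·m`. -/
def coextDiffFrom (C : DGCoalgebra) (M : Type) [AddCommGroup M] [Module ℚ M]
    (dM : M →ₗ[ℚ] M) (tact : C.carrier ⊗[ℚ] M →ₗ[ℚ] M) :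
    C.carrier ⊗[ℚ] M →ₗ[ℚ] C.carrier ⊗[ℚ] M :=
  TensorProduct.map C.d LinearMap.id + TensorProduct.map (parityOf C.grading) dM
    + (TensorProduct.map (parityOf C.grading) tact).comp (coextCoact C M)

/-- The differential of the twisted coextension `C ⊗^τ M` of an `A`-module `(M, dM, act)`. -/
def coextDiff (C : DGCoalgebra) (A : DGAlgebra) (τ : TwistingChain C A)
    (M : Type) [AddCommGroup M] [Module ℚ M]
    (dM : M →ₗ[ℚ] M) (act : A.carrier ⊗[ℚ] M →ₗ[ℚ] M) :
    C.carrier ⊗[ℚ] M →ₗ[ℚ] C.carrier ⊗[ℚ] M :=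
  coextDiffFrom C M dM (act.comp (TensorProduct.map τ.toFun LinearMap.id))

/-- Morphisms of dg algebras. -/
structure DGAlgebraHom (A B : DGAlgebra) where
  toLinearMap : A.carrier →ₗ[ℚ] B.carrier
  mem : ∀ (n : ℤ), ∀ x ∈ A.grading n, toLinearMap x ∈ B.grading n
  chain : toLinearMap.comp A.d = B.d.comp toLinearMap
  map_one : toLinearMap A.one = B.one
  map_mul : ∀ x y : A.carrier, toLinearMap (A.mul x y) = B.mul (toLinearMap x) (toLinearMap y)

/-- Data exhibiting a dg algebra as the cobar construction `ΩC` of a coaugmented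
dg coalgebra `C`, via the universal twisting chain `t : C ⇝ ΩC`:
dg algebra maps `ΩC → A` correspond bijectively to twisting chains `C ⇝ A`
vanishing on the coaugmentation. -/
structure CobarData (C : CoaugDGCoalgebra) where
  alg : DGAlgebra
  t : TwistingChain C.toDGCoalgebra alg
  t_one : t.toFun C.one = 0
  univ : ∀ (A : DGAlgebra) (τ : TwistingChain C.toDGCoalgebra A), τ.toFun C.one = 0 →
    ∃! F : DGAlgebraHom alg A, F.toLinearMap.comp t.toFun = τ.toFun

/-- A morphism of `C`-comodules is a `t`-equivalence if the induced morphism of twisted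
extensions `ΩC ⊗_t N → ΩC ⊗_t M` is a quasi-isomorphism. -/
def IsTEquiv (C : CoaugDGCoalgebra) (Ω : CobarData C) (N M : DGComodule C.toDGCoalgebra)
    (f : N.carrier →ₗ[ℚ] M.carrier) : Prop :=
  IsQuasiIso (extDiff C.toDGCoalgebra Ω.alg Ω.t N.carrier N.d N.coact)
    (extDiff C.toDGCoalgebra Ω.alg Ω.t M.carrier M.d M.coact)
    (TensorProduct.map LinearMap.id f)

/-! ## Statement 9: the cobar construction preserves quasi-isomorphisms -/

/-- A morphism of coaugmented dg coalgebras. -/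
structure CoaugCoalgebraHom (C D : CoaugDGCoalgebra) where
  toLinearMap : C.carrier →ₗ[ℚ] D.carrier
  mem : ∀ (n : ℤ), ∀ x ∈ C.grading n, toLinearMap x ∈ D.grading n
  chain : toLinearMap.comp C.d = D.d.comp toLinearMap
  comul_comp : (TensorProduct.map toLinearMap toLinearMap).comp C.comul
    = D.comul.comp toLinearMap
  counit_comp : D.counit.comp toLinearMap = C.counit
  map_one : toLinearMap C.one = D.one

/-!
The universal property of `ΩC` determines it up to isomorphism, so that `Ωψ` may be computed on
the tensor algebra `T(C̄[1])`. Its differential is the one induced by the complex `C̄[1]` plus a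
term which raises the word length by one. Over a field, `ψ` has a homotopy inverse as a map of
complexes; it need not respect the comultiplication, but the algebra map and the skew derivations
it induces on tensor algebras exhibit it as a homotopy inverse of `Ωψ` up to terms raising the
word length. They assemble to an endomorphism `S` of the mapping cone of `Ωψ` such that
`1 - (dS + Sd)` raises the word length after at most two applications. As `C` and `D` are
2-reduced, words of length `p` have degree at least `p`, so this operator is locally nilpotent,
and hence the cone is acyclic.
-/

section Degree

variable {R ι M N P : Type*} [Ring R] [AddCommGroup M] [Module R M] [AddCommGroup N]
  [Module R N] [AddCommGroup P] [Module R P]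

/-- `f` has degree `k` for families of submodules `A`, `B` indexed by an additive type. The index
`ι = ℤ` is used for gradings, and `ι = ℕ × ℤ` for gradings equipped with a filtration. -/
def HasDegree [Add ι] (A : ι → Submodule R M) (B : ι → Submodule R N) (k : ι)
    (f : M →ₗ[R] N) : Prop :=
  ∀ ⦃i x⦄, x ∈ A i → f x ∈ B (i + k)

namespace HasDegree

variable {A : ι → Submodule R M} {B : ι → Submodule R N} {C : ι → Submodule R P}

theorem add [Add ι] {k : ι} {f g : M →ₗ[R] N} (hf : HasDegree A B k f)
    (hg : HasDegree A B k g) : HasDegree A B k (f + g) :=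
  fun _ _ hx => add_mem (hf hx) (hg hx)

theorem sub [Add ι] {k : ι} {f g : M →ₗ[R] N} (hf : HasDegree A B k f)
    (hg : HasDegree A B k g) : HasDegree A B k (f - g) :=
  fun _ _ hx => sub_mem (hf hx) (hg hx)

theorem comp [AddSemigroup ι] {k l m : ι} {g : N →ₗ[R] P} {f : M →ₗ[R] N}
    (hg : HasDegree B C l g) (hf : HasDegree A B k f) (h : k + l = m) :
    HasDegree A C m (g ∘ₗ f) :=
  fun i x hx => by rw [← h, ← add_assoc]; exact hg (hf hx)

theorem id [AddMonoid ι] : HasDegree A A 0 (LinearMap.id : M →ₗ[R] M) :=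
  fun i x hx => by rwa [add_zero]

theorem mem [AddMonoid ι] {f : M →ₗ[R] N} (hf : HasDegree A B 0 f) {i : ι} {x : M}
    (hx : x ∈ A i) : f x ∈ B i := by
  simpa only [add_zero] using hf hx

end HasDegree

end Degree

section HomogeneousPart

open DirectSum

variable {R ι M N P : Type*} [Ring R] [AddCommGroup M] [Module R M] [AddCommGroup N]
  [Module R N] [AddCommGroup P] [Module R P] [DecidableEq ι]
  (𝒜 : ι → Submodule R M) (ℬ : ι → Submodule R N) {𝒞 : ι → Submodule R P}
  [Decomposition 𝒜] [Decomposition ℬ] [Decomposition 𝒞]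

theorem linearMap_ext_homogeneous {f g : M →ₗ[R] N} (h : ∀ n, ∀ x ∈ 𝒜 n, f x = g x) : f = g :=
  decompose_lhom_ext 𝒜 fun n => LinearMap.ext fun x => h n x x.2

variable [AddCommGroup ι]

/-- The degree `k` part of a linear map between graded modules: on `𝒜 n` it is `f` followed by
the projection to `ℬ (n + k)`. -/
def homogeneousPart (k : ι) (f : M →ₗ[R] N) : M →ₗ[R] N :=
  toModule R ι N (fun n => (ℬ (n + k)).subtype ∘ₗ component R ι (fun i => ℬ i) (n + k) ∘ₗ
    (decomposeLinearEquiv ℬ).toLinearMap ∘ₗ f ∘ₗ (𝒜 n).subtype) ∘ₗ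
      (decomposeLinearEquiv 𝒜).toLinearMap

variable {𝒜 ℬ}

theorem homogeneousPart_apply (k : ι) (f : M →ₗ[R] N) {n : ι} {x : M} (hx : x ∈ 𝒜 n) :
    homogeneousPart 𝒜 ℬ k f x = decompose ℬ (f x) (n + k) := by
  simp only [homogeneousPart, LinearMap.comp_apply, LinearEquiv.coe_coe,
    decomposeLinearEquiv_apply, decompose_of_mem 𝒜 hx, ← lof_eq_of R, toModule_lof]
  rfl

theorem hasDegree_homogeneousPart (k : ι) (f : M →ₗ[R] N) :
    HasDegree 𝒜 ℬ k (homogeneousPart 𝒜 ℬ k f) := fun i x hx => by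
  rw [homogeneousPart_apply k f hx]
  exact (decompose ℬ (f x) (i + k)).2

theorem HasDegree.homogeneousPart_eq {k : ι} {f : M →ₗ[R] N} (hf : HasDegree 𝒜 ℬ k f) :
    homogeneousPart 𝒜 ℬ k f = f :=
  linearMap_ext_homogeneous 𝒜 fun n x hx => by
    rw [homogeneousPart_apply k f hx, decompose_of_mem_same ℬ (hf hx)]

theorem homogeneousPart_add (k : ι) (f g : M →ₗ[R] N) :
    homogeneousPart 𝒜 ℬ k (f + g) = homogeneousPart 𝒜 ℬ k f + homogeneousPart 𝒜 ℬ k g :=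
  linearMap_ext_homogeneous 𝒜 fun n x hx => by simp [homogeneousPart_apply _ _ hx]

theorem homogeneousPart_sub (k : ι) (f g : M →ₗ[R] N) :
    homogeneousPart 𝒜 ℬ k (f - g) = homogeneousPart 𝒜 ℬ k f - homogeneousPart 𝒜 ℬ k g :=
  linearMap_ext_homogeneous 𝒜 fun n x hx => by simp [homogeneousPart_apply _ _ hx]

theorem HasDegree.decompose_apply {l : ι} {g : M →ₗ[R] N} (hg : HasDegree 𝒜 ℬ l g) (x : M)
    (i : ι) : (decompose ℬ (g x) (i + l) : N) = g (decompose 𝒜 x i) := by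
  induction x using Decomposition.inductionOn 𝒜 with
  | zero => simp
  | @homogeneous j x =>
    obtain rfl | hij := eq_or_ne j i
    · rw [decompose_of_mem_same ℬ (hg x.2), decompose_of_mem_same 𝒜 x.2]
    · rw [decompose_of_mem_ne ℬ (hg x.2) (by simpa using hij), decompose_of_mem_ne 𝒜 x.2 hij,
        map_zero]
  | add x y hx hy => simp [hx, hy]

theorem HasDegree.homogeneousPart_comp_left {k l m : ι} {g : N →ₗ[R] P} (hg : HasDegree ℬ 𝒞 l g)
    (f : M →ₗ[R] N) (h : k + l = m) :
    homogeneousPart 𝒜 𝒞 m (g ∘ₗ f) = g ∘ₗ homogeneousPart 𝒜 ℬ k f :=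
  linearMap_ext_homogeneous 𝒜 fun n x hx => by
    rw [homogeneousPart_apply _ _ hx, LinearMap.comp_apply, LinearMap.comp_apply,
      homogeneousPart_apply _ _ hx, ← h, ← add_assoc, hg.decompose_apply]

theorem HasDegree.homogeneousPart_comp_right {k l m : ι} {f : M →ₗ[R] N} (hf : HasDegree 𝒜 ℬ l f)
    (g : N →ₗ[R] P) (h : l + k = m) :
    homogeneousPart 𝒜 𝒞 m (g ∘ₗ f) = homogeneousPart ℬ 𝒞 k g ∘ₗ f :=
  linearMap_ext_homogeneous 𝒜 fun n x hx => by
    rw [homogeneousPart_apply _ _ hx, LinearMap.comp_apply, LinearMap.comp_apply,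
      homogeneousPart_apply _ _ (hf hx), ← h, ← add_assoc]

end HomogeneousPart

section Cone

variable {R V W : Type*} [Ring R] [AddCommGroup V] [Module R V] [AddCommGroup W] [Module R W]

/-- The differential `(x, y) ↦ (-dx, f x + dy)` of the mapping cone of `f`. -/
def coneDiff (dV : V →ₗ[R] V) (dW : W →ₗ[R] W) (f : V →ₗ[R] W) : Module.End R (V × W) :=
  (-(dV ∘ₗ .fst R V W)).prod (f ∘ₗ .fst R V W + dW ∘ₗ .snd R V W)

theorem coneDiff_apply (dV : V →ₗ[R] V) (dW : W →ₗ[R] W) (f : V →ₗ[R] W) (x : V) (y : W) :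
    coneDiff dV dW f (x, y) = (-dV x, f x + dW y) := rfl

theorem coneDiff_sq {dV : V →ₗ[R] V} {dW : W →ₗ[R] W} {f : V →ₗ[R] W} (hdV : dV ∘ₗ dV = 0)
    (hdW : dW ∘ₗ dW = 0) (hf : f ∘ₗ dV = dW ∘ₗ f) :
    coneDiff dV dW f * coneDiff dV dW f = 0 := by
  simp only [LinearMap.ext_iff, LinearMap.comp_apply, LinearMap.zero_apply] at hdV hdW hf
  ext x <;> simp [coneDiff_apply, hdV, hdW, hf]

end Cone

section Complexes

variable {V W V' W' : Type} [AddCommGroup V] [Module ℚ V] [AddCommGroup W] [Module ℚ W]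
  [AddCommGroup V'] [Module ℚ V'] [AddCommGroup W'] [Module ℚ W']

theorem IsQuasiIso.of_retract {dV : V →ₗ[ℚ] V} {dW : W →ₗ[ℚ] W} {f : V →ₗ[ℚ] W}
    {dV' : V' →ₗ[ℚ] V'} {dW' : W' →ₗ[ℚ] W'} {f' : V' →ₗ[ℚ] W'} (hf : IsQuasiIso dV dW f)
    {i : V' →ₗ[ℚ] V} {r : V →ₗ[ℚ] V'} {j : W' →ₗ[ℚ] W} {s : W →ₗ[ℚ] W'}
    (hri : r ∘ₗ i = .id) (hsj : s ∘ₗ j = .id)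
    (hi : i ∘ₗ dV' = dV ∘ₗ i) (hr : r ∘ₗ dV = dV' ∘ₗ r)
    (hj : j ∘ₗ dW' = dW ∘ₗ j) (hs : s ∘ₗ dW = dW' ∘ₗ s)
    (hfi : f ∘ₗ i = j ∘ₗ f') (hsf : s ∘ₗ f = f' ∘ₗ r) : IsQuasiIso dV' dW' f' := by
  simp only [LinearMap.ext_iff, LinearMap.comp_apply, LinearMap.id_apply] at *
  refine ⟨fun x hx ⟨y, hy⟩ => ?_, fun w hw => ?_⟩
  · obtain ⟨z, hz⟩ := hf.1 (i x) (by rw [← hi, hx, map_zero]) ⟨j y, by rw [hfi, hy, hj]⟩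
    exact ⟨r z, by rw [← hr, ← hz, hri]⟩
  · obtain ⟨x, hx, y, hy⟩ := hf.2 (j w) (by rw [← hj, hw, map_zero])
    exact ⟨r x, by rw [← hr, hx, map_zero], s y, by rw [← hs, ← hy, map_sub, hsj, hsf]⟩

theorem isQuasiIso_iff_ker_coneDiff_le_range {dV : V →ₗ[ℚ] V} {dW : W →ₗ[ℚ] W} {f : V →ₗ[ℚ] W}
    (hf : f ∘ₗ dV = dW ∘ₗ f) :
    IsQuasiIso dV dW f ↔ (coneDiff dV dW f).ker ≤ (coneDiff dV dW f).range := by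
  simp only [LinearMap.ext_iff, LinearMap.comp_apply] at hf
  refine ⟨fun ⟨hinj, hsurj⟩ ⟨x, y⟩ hxy => ?_, fun h => ⟨fun x hx ⟨y, hy⟩ => ?_, fun w hw => ?_⟩⟩
  · simp only [LinearMap.mem_ker, coneDiff_apply, Prod.mk_eq_zero, neg_eq_zero] at hxy
    obtain ⟨hx, hy⟩ := hxy
    obtain ⟨z, rfl⟩ := hinj x hx ⟨-y, by rw [map_neg, eq_neg_of_add_eq_zero_left hy]⟩
    obtain ⟨x', hx', y', hy'⟩ := hsurj (f z + y) (by rw [map_add, ← hf, hy])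
    refine ⟨(x' - z, y'), ?_⟩
    rw [coneDiff_apply, ← hy', map_sub, map_sub, hx']
    exact Prod.ext (by simp) (by simp)
  · obtain ⟨⟨a, b⟩, hab⟩ := h (x := (x, -y)) (by simp [coneDiff_apply, hx, hy])
    exact ⟨-a, by rw [map_neg]; exact congrArg Prod.fst hab.symm⟩
  · obtain ⟨⟨a, b⟩, hab⟩ := h (x := (0, w)) (by simp [coneDiff_apply, hw])
    rw [coneDiff_apply, Prod.mk.injEq, neg_eq_zero] at hab
    exact ⟨a, hab.1, b, by rw [← hab.2, add_sub_cancel_left]⟩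

end Complexes

section Acyclicity

variable {K V : Type*} [AddCommGroup V]

theorem exists_contraction [DivisionRing K] [Module K V] {d : Module.End K V} (hd : d * d = 0)
    (hexact : d.ker ≤ d.range) : ∃ h : Module.End K V, d * h + h * d = 1 := by
  obtain ⟨s, hs⟩ := d.rangeRestrict.exists_rightInverse_of_surjective d.range_rangeRestrict
  obtain ⟨π, hπ⟩ := d.range.subtype.exists_leftInverse_of_injective d.range.ker_subtype
  have hsπ : ∀ x, d x = 0 → d (s (π x)) = x := fun x hx => by
    obtain ⟨y, rfl⟩ := hexact hx
    have hπy : π (d y) = d.rangeRestrict y := LinearMap.congr_fun hπ (d.rangeRestrict y)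
    rw [hπy]
    exact congrArg Subtype.val (LinearMap.congr_fun hs (d.rangeRestrict y))
  have hdd : ∀ x, d (d x) = 0 := LinearMap.congr_fun hd
  refine ⟨s ∘ₗ π ∘ₗ (1 - s ∘ₗ π ∘ₗ d), LinearMap.ext fun x => ?_⟩
  have hcycle : d (x - s (π (d x))) = 0 := by rw [map_sub, hsπ _ (hdd x), sub_self]
  change d (s (π (x - s (π (d x))))) + s (π (d x - s (π (d (d x))))) = x
  simp only [hsπ _ hcycle, hdd, map_zero, sub_zero, sub_add_cancel]

-- A cycle `z` is homologous to `P z`, hence to `P ^ k z = 0`.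
theorem ker_le_range_of_locally_nilpotent [Ring K] [Module K V] {d S P : Module.End K V}
    (hd : d * d = 0) (hS : d * S + S * d = 1 - P) (hP : ∀ z, ∃ k, (P ^ k) z = 0) :
    d.ker ≤ d.range := by
  have hPdef : P = 1 - (d * S + S * d) := by rw [hS, sub_sub_cancel]
  have eq_add_of_cycle : ∀ z, d z = 0 → z = P z + d (S z) := fun z hz => by simp [hPdef, hz]
  have hdP : d * P = P * d := by
    simp only [hPdef, mul_sub, sub_mul, mul_add, add_mul, ← mul_assoc, hd]
    simp [mul_assoc, hd]
  have mem_range_of_pow : ∀ (k : ℕ) (z : V), d z = 0 → (P ^ k) z = 0 → z ∈ d.range := by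
    intro k
    induction k with
    | zero => rintro z - hz; rw [show z = 0 from hz]; exact zero_mem _
    | succ k ih =>
      intro z hdz hz
      rw [eq_add_of_cycle z hdz]
      refine add_mem (ih (P z) ?_ (by rwa [pow_succ] at hz)) ⟨S z, rfl⟩
      rw [← Module.End.mul_apply, hdP, Module.End.mul_apply, hdz, map_zero]
  intro z hz
  obtain ⟨k, hk⟩ := hP z
  exact mem_range_of_pow k z hz hk

end Acyclicity

section HomotopyInverse

theorem IsQuasiIso.exists_homotopyInverse {V W : Type} [AddCommGroup V] [Module ℚ V]
    [AddCommGroup W] [Module ℚ W] {dV : V →ₗ[ℚ] V} {dW : W →ₗ[ℚ] W} {f : V →ₗ[ℚ] W}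
    (hq : IsQuasiIso dV dW f) (hdV : dV ∘ₗ dV = 0) (hdW : dW ∘ₗ dW = 0)
    (hf : f ∘ₗ dV = dW ∘ₗ f) :
    ∃ (g : W →ₗ[ℚ] V) (a : V →ₗ[ℚ] V) (b : W →ₗ[ℚ] W), g ∘ₗ dW = dV ∘ₗ g ∧
      dV ∘ₗ a + a ∘ₗ dV = g ∘ₗ f - .id ∧ dW ∘ₗ b + b ∘ₗ dW = f ∘ₗ g - .id := by
  obtain ⟨h, hh⟩ := exists_contraction (coneDiff_sq hdV hdW hf)
    ((isQuasiIso_iff_ker_coneDiff_le_range hf).1 hq)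
  -- The homotopy inverse and the two homotopies are entries of the contraction of the cone.
  refine ⟨.fst ℚ V W ∘ₗ h ∘ₗ .inr ℚ V W, .fst ℚ V W ∘ₗ h ∘ₗ .inl ℚ V W,
    -(.snd ℚ V W ∘ₗ h ∘ₗ .inr ℚ V W), LinearMap.ext fun y => ?_, LinearMap.ext fun x => ?_,
    LinearMap.ext fun y => ?_⟩
  · have key : -dV (h (0, y)).1 + (h (0, dW y)).1 = 0 := by
      simpa [coneDiff] using congrArg Prod.fst (LinearMap.congr_fun hh (0, y))
    exact (neg_add_eq_zero.1 key).symm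
  · have key : -dV (h (x, 0)).1 + (h (-dV x, f x)).1 = x := by
      simpa [coneDiff] using congrArg Prod.fst (LinearMap.congr_fun hh (x, 0))
    have split : h (-dV x, f x) = h (0, f x) - h (dV x, 0) := by rw [← map_sub]; simp
    rw [split, Prod.fst_sub] at key
    change dV (h (x, 0)).1 + (h (dV x, 0)).1 = (h (0, f x)).1 - x
    linear_combination (norm := module) -key
  · have key : f (h (0, y)).1 + dW (h (0, y)).2 + (h (0, dW y)).2 = y := by
      simpa [coneDiff] using congrArg Prod.snd (LinearMap.congr_fun hh (0, y))
    change dW (-(h (0, y)).2) + -(h (0, dW y)).2 = f (h (0, y)).1 - y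
    rw [map_neg]
    linear_combination (norm := module) -key

theorem DGVect.hasDegree_d (V : DGVect) : HasDegree V.grading V.grading (-1) V.d := V.d_mem

theorem IsQuasiIso.exists_graded_homotopyInverse {V W : DGVect} {f : V.carrier →ₗ[ℚ] W.carrier}
    (hq : IsQuasiIso V.d W.d f) (hdeg : HasDegree V.grading W.grading 0 f)
    (hf : f ∘ₗ V.d = W.d ∘ₗ f) :
    ∃ (g : W.carrier →ₗ[ℚ] V.carrier) (a : V.carrier →ₗ[ℚ] V.carrier)
      (b : W.carrier →ₗ[ℚ] W.carrier), HasDegree W.grading V.grading 0 g ∧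
      HasDegree V.grading V.grading 1 a ∧ HasDegree W.grading W.grading 1 b ∧
      g ∘ₗ W.d = V.d ∘ₗ g ∧ V.d ∘ₗ a + a ∘ₗ V.d = g ∘ₗ f - .id ∧
      W.d ∘ₗ b + b ∘ₗ W.d = f ∘ₗ g - .id := by
  obtain ⟨g, a, b, hg, ha, hb⟩ := hq.exists_homotopyInverse V.d_sq W.d_sq hf
  refine ⟨homogeneousPart W.grading V.grading 0 g, homogeneousPart V.grading V.grading 1 a,
    homogeneousPart W.grading W.grading 1 b, hasDegree_homogeneousPart _ _,
    hasDegree_homogeneousPart _ _, hasDegree_homogeneousPart _ _, ?_, ?_, ?_⟩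
  · rw [← W.hasDegree_d.homogeneousPart_comp_right g (add_zero (-1)), hg,
      V.hasDegree_d.homogeneousPart_comp_left g (zero_add (-1))]
  · rw [← V.hasDegree_d.homogeneousPart_comp_left a (add_neg_cancel 1),
      ← V.hasDegree_d.homogeneousPart_comp_right a (neg_add_cancel 1), ← homogeneousPart_add, ha,
      homogeneousPart_sub, HasDegree.id.homogeneousPart_eq,
      hdeg.homogeneousPart_comp_right g (add_zero 0)]
  · rw [← W.hasDegree_d.homogeneousPart_comp_left b (add_neg_cancel 1),
      ← W.hasDegree_d.homogeneousPart_comp_right b (neg_add_cancel 1), ← homogeneousPart_add, hb,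
      homogeneousPart_sub, HasDegree.id.homogeneousPart_eq,
      hdeg.homogeneousPart_comp_left g (add_zero 0)]

end HomotopyInverse

section Filtration

/-- A family `F (p, n)`, where `n` is the homological degree and `p` is a decreasing filtration
degree, that exhausts the module for `p = 0` and vanishes for `n < p`. -/
structure IsBoundedFiltration {R V : Type*} [Ring R] [AddCommGroup V] [Module R V]
    (F : ℕ × ℤ → Submodule R V) : Prop where
  antitone : ∀ n, Antitone fun p => F (p, n)
  eq_bot : ∀ {p : ℕ} {n : ℤ}, n < p → F (p, n) = ⊥
  iSup_eq_top : ⨆ n, F (0, n) = ⊤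

theorem IsBoundedFiltration.exists_pow_prod_apply_eq_zero {R V W : Type*} [CommRing R]
    [AddCommGroup V] [Module R V] [AddCommGroup W] [Module R W] {FV : ℕ × ℤ → Submodule R V}
    {FW : ℕ × ℤ → Submodule R W} (hFV : IsBoundedFiltration FV) (hFW : IsBoundedFiltration FW)
    {Q : Module.End R (V × W)} (hQ : ∀ p n, ∀ z ∈ (FV (p, n)).prod (FW (p, n + 1)),
      Q z ∈ (FV (p + 1, n)).prod (FW (p + 1, n + 1)))
    (z : V × W) : ∃ k, (Q ^ k) z = 0 := by
  have pow_mem : ∀ (k : ℕ) (n : ℤ), ∀ z ∈ (FV (0, n)).prod (FW (0, n + 1)),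
      (Q ^ k) z ∈ (FV (k, n)).prod (FW (k, n + 1)) := by
    intro k n z hz
    induction k with
    | zero => exact hz
    | succ k ih => rw [pow_succ']; exact hQ k n _ ih
  have nilpotent : ∀ n : ℤ, (FV (0, n)).prod (FW (0, n + 1)) ≤ Q.maxGenEigenspace 0 := by
    intro n z hz
    have hlt : n + 1 < ((n + 2).toNat : ℤ) := by omega
    have hpow := pow_mem (n + 2).toNat n z hz
    rw [hFV.eq_bot (by omega), hFW.eq_bot hlt, Submodule.prod_bot, Submodule.mem_bot] at hpow
    exact (Module.End.mem_maxGenEigenspace Q 0 z).2 ⟨_, by simpa using hpow⟩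
  have inl_le : ⊤ ≤ (Q.maxGenEigenspace 0).comap (.inl R V W) := hFV.iSup_eq_top ▸
    iSup_le fun n x hx => nilpotent n ⟨hx, zero_mem _⟩
  have inr_le : ⊤ ≤ (Q.maxGenEigenspace 0).comap (.inr R V W) := hFW.iSup_eq_top ▸
    iSup_le fun n y hy => nilpotent (n - 1) ⟨zero_mem _, by simpa using hy⟩
  have hz : z ∈ Q.maxGenEigenspace 0 := Prod.fst_add_snd z ▸
    add_mem (inl_le (Submodule.mem_top (x := z.1))) (inr_le (Submodule.mem_top (x := z.2)))
  simpa using (Module.End.mem_maxGenEigenspace Q 0 z).1 hz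

theorem isQuasiIso_of_filtered_homotopyInverse {V W : Type} [AddCommGroup V] [Module ℚ V]
    [AddCommGroup W] [Module ℚ W] {FV : ℕ × ℤ → Submodule ℚ V} {FW : ℕ × ℤ → Submodule ℚ W}
    (hFV : IsBoundedFiltration FV) (hFW : IsBoundedFiltration FW)
    {dV : V →ₗ[ℚ] V} {dW : W →ₗ[ℚ] W} (hdV : dV ∘ₗ dV = 0)
    (hdW : dW ∘ₗ dW = 0) {f : V →ₗ[ℚ] W} {g : W →ₗ[ℚ] V} {a : V →ₗ[ℚ] V} {b : W →ₗ[ℚ] W}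
    (hfd : f ∘ₗ dV = dW ∘ₗ f) (hf : HasDegree FV FW 0 f)
    (ha : HasDegree FV FV (0, 1) a) (hb : HasDegree FW FW (0, 1) b)
    (hgd : HasDegree FW FV (1, -1) (dV ∘ₗ g - g ∘ₗ dW))
    (hgf : HasDegree FV FV (1, 0) (dV ∘ₗ a + a ∘ₗ dV - (g ∘ₗ f - .id)))
    (hfg : HasDegree FW FW (1, 0) (dW ∘ₗ b + b ∘ₗ dW - (f ∘ₗ g - .id))) :
    IsQuasiIso dV dW f := by
  let S : Module.End ℚ (V × W) := (a ∘ₗ .fst ℚ V W + g ∘ₗ .snd ℚ V W).prod (-(b ∘ₗ .snd ℚ V W))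
  set P := 1 - (coneDiff dV dW f * S + S * coneDiff dV dW f) with hP
  have hP_apply : ∀ x y, P (x, y) = ((dV ∘ₗ a + a ∘ₗ dV - (g ∘ₗ f - .id)) x +
      (dV ∘ₗ g - g ∘ₗ dW) y, (b ∘ₗ f - f ∘ₗ a) x + (dW ∘ₗ b + b ∘ₗ dW - (f ∘ₗ g - .id)) y) := by
    intro x y
    refine Prod.ext ?_ ?_ <;> simp [hP, S, coneDiff] <;> abel
  have hP_mem : ∀ p q n, q ≤ p → p ≤ q + 1 → ∀ z ∈ (FV (p, n)).prod (FW (q, n + 1)),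
      P z ∈ (FV (q + 1, n)).prod (FW (p, n + 1)) := by
    rintro p q n hqp hpq ⟨x, y⟩ ⟨hx, hy⟩
    rw [hP_apply]
    refine ⟨add_mem (hFV.antitone n (by omega : q + 1 ≤ p + 1) ?_) ?_,
      add_mem ?_ (hFW.antitone (n + 1) hpq ?_)⟩
    · simpa using hgf hx
    · simpa using hgd hy
    · exact ((hb.comp hf (zero_add (0, 1))).sub (hf.comp ha (add_zero (0, 1)))) hx
    · simpa using hfg hy
  have hP_sq : ∀ p n, ∀ z ∈ (FV (p, n)).prod (FW (p, n + 1)),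
      (P ^ 2) z ∈ (FV (p + 1, n)).prod (FW (p + 1, n + 1)) := fun p n z hz => by
    rw [pow_two]
    exact hP_mem (p + 1) p n p.le_succ le_rfl _ (hP_mem p p n le_rfl p.le_succ z hz)
  have hP_nilpotent : ∀ z, ∃ k, (P ^ k) z = 0 := fun z =>
    let ⟨k, hk⟩ := hFV.exists_pow_prod_apply_eq_zero hFW hP_sq z
    ⟨2 * k, by rwa [pow_mul]⟩
  exact (isQuasiIso_iff_ker_coneDiff_le_range hfd).2
    (ker_le_range_of_locally_nilpotent (coneDiff_sq hdV hdW hfd) (S := S) (sub_sub_cancel _ _).symm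
      hP_nilpotent)

end Filtration

section SkewDerivation

variable {R V A B C : Type*} [CommRing R] [AddCommGroup V] [Module R V] [Ring A] [Algebra R A]
  [Ring B] [Algebra R B] [Ring C] [Algebra R C]

/-- `D` is an `(f, g)`-skew derivation. A graded derivation of degree `-1` is one where `f` is the
parity automorphism `x ↦ (-1)^|x| x` and `g` is the identity. -/
def IsSkewDerivation (f g : A →ₐ[R] B) (D : A →ₗ[R] B) : Prop :=
  ∀ x y, D (x * y) = f x * D y + D x * g y

namespace IsSkewDerivation

variable {f g : A →ₐ[R] B} {D D' : A →ₗ[R] B}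

theorem zero : IsSkewDerivation f g 0 := fun x y => by simp

theorem sub (hD : IsSkewDerivation f g D) (hD' : IsSkewDerivation f g D') :
    IsSkewDerivation f g (D - D') := fun x y => by
  simp only [LinearMap.sub_apply, hD x y, hD' x y]
  noncomm_ring

theorem algHom_sub (f g : A →ₐ[R] B) : IsSkewDerivation f g (f.toLinearMap - g.toLinearMap) :=
  fun x y => by
    simp only [LinearMap.sub_apply, AlgHom.toLinearMap_apply, map_mul]
    noncomm_ring

theorem algHom_comp (h : B →ₐ[R] C) (hD : IsSkewDerivation f g D) :
    IsSkewDerivation (h.comp f) (h.comp g) (h.toLinearMap ∘ₗ D) := fun x y => by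
  simp [hD x y]

theorem comp_algHom (h : C →ₐ[R] A) (hD : IsSkewDerivation f g D) :
    IsSkewDerivation (f.comp h) (g.comp h) (D ∘ₗ h.toLinearMap) := fun x y => by
  simp [hD (h x) (h y)]

theorem map_one (hD : IsSkewDerivation f g D) : D 1 = 0 := by
  simpa using hD 1 1

theorem anticommutator {σ τ : A →ₐ[R] A} {D H : A →ₗ[R] A} (hD : IsSkewDerivation σ (.id R A) D)
    (hH : IsSkewDerivation τ (.id R A) H) (hστ : τ.comp σ = σ.comp τ)
    (hDτ : D ∘ₗ τ.toLinearMap = -(τ.toLinearMap ∘ₗ D))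
    (hHσ : H ∘ₗ σ.toLinearMap = -(σ.toLinearMap ∘ₗ H)) :
    IsSkewDerivation (σ.comp τ) (.id R A) (D ∘ₗ H + H ∘ₗ D) := fun x y => by
  have hστx : τ (σ x) = σ (τ x) := DFunLike.congr_fun hστ x
  have hDτx : D (τ x) = -τ (D x) := DFunLike.congr_fun hDτ x
  have hHσx : H (σ x) = -σ (H x) := DFunLike.congr_fun hHσ x
  simp only [LinearMap.add_apply, LinearMap.comp_apply, AlgHom.comp_apply, AlgHom.id_apply,
    hD _ _, hH _ _, map_add, hστx, hDτx, hHσx]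
  noncomm_ring

theorem tensorAlgebra_ext {f g : TensorAlgebra R V →ₐ[R] B} {D D' : TensorAlgebra R V →ₗ[R] B}
    (hD : IsSkewDerivation f g D) (hD' : IsSkewDerivation f g D')
    (h : ∀ v, D (TensorAlgebra.ι R v) = D' (TensorAlgebra.ι R v)) : D = D' := by
  refine LinearMap.ext fun x => ?_
  induction x using TensorAlgebra.induction with
  | algebraMap r => simp only [Algebra.algebraMap_eq_smul_one, map_smul, hD.map_one, hD'.map_one]
  | ι v => exact h v
  | mul x y hx hy => rw [hD, hD', hx, hy]
  | add x y hx hy => rw [map_add, map_add, hx, hy]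

end IsSkewDerivation

/-- The algebra map `v ↦ !![f v, L v; 0, g v]`. Multiplying upper triangular matrices shows that
its upper right entry is an `(f, g)`-skew derivation. -/
def upperTriangularLift (f g : TensorAlgebra R V →ₐ[R] B) (L : V →ₗ[R] B) :
    TensorAlgebra R V →ₐ[R] Matrix (Fin 2) (Fin 2) B :=
  TensorAlgebra.lift R
    { toFun v := !![f (TensorAlgebra.ι R v), L v; 0, g (TensorAlgebra.ι R v)]
      map_add' v w := by simp
      map_smul' r v := by simp }

/-- The `(f, g)`-skew derivation on the tensor algebra with prescribed values `L` on generators. -/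
def skewDer (f g : TensorAlgebra R V →ₐ[R] B) (L : V →ₗ[R] B) : TensorAlgebra R V →ₗ[R] B :=
  Matrix.entryLinearMap R B 0 1 ∘ₗ (upperTriangularLift f g L).toLinearMap

variable (f g : TensorAlgebra R V →ₐ[R] B) (L : V →ₗ[R] B)

theorem upperTriangularLift_apply (x : TensorAlgebra R V) :
    upperTriangularLift f g L x = !![f x, skewDer f g L x; 0, g x] := by
  suffices h : upperTriangularLift f g L x 0 0 = f x ∧ upperTriangularLift f g L x 1 0 = 0 ∧
      upperTriangularLift f g L x 1 1 = g x by
    ext i j; fin_cases i <;> fin_cases j <;> simp [skewDer, h]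
  induction x using TensorAlgebra.induction with
  | algebraMap r => simp [Matrix.algebraMap_matrix_apply]
  | ι v => simp [upperTriangularLift]
  | mul x y hx hy => simp [Matrix.mul_apply, hx, hy]
  | add x y hx hy => simp [hx, hy]

@[simp]
theorem skewDer_ι (v : V) : skewDer f g L (TensorAlgebra.ι R v) = L v := by
  simp [skewDer, upperTriangularLift]

theorem isSkewDerivation_skewDer : IsSkewDerivation f g (skewDer f g L) := fun x y => by
  have key := congrFun₂ (map_mul (upperTriangularLift f g L) x y) 0 1
  simpa only [upperTriangularLift_apply, Matrix.mul_fin_two, Matrix.of_apply, Matrix.cons_val]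
    using key

end SkewDerivation

section Words

open TensorAlgebra

variable {R V W B ι : Type*} [CommRing R] [AddCommGroup V] [Module R V] [AddCommGroup W]
  [Module R W] [Ring B] [Algebra R B]

/-- `IsWord 𝒱 p n w`: the tensor `w` is a product of `p` homogeneous elements of `V` of total
degree `n`. -/
inductive IsWord [AddCommMonoid ι] (𝒱 : ι → Submodule R V) : ℕ → ι → TensorAlgebra R V → Prop
  | one : IsWord 𝒱 0 0 1
  | cons {m n : ι} {p : ℕ} {v : V} {w : TensorAlgebra R V} (hv : v ∈ 𝒱 m) (hw : IsWord 𝒱 p n w) :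
    IsWord 𝒱 (p + 1) (m + n) (TensorAlgebra.ι R v * w)

theorem IsWord.mul [AddCommMonoid ι] {𝒱 : ι → Submodule R V} {p q : ℕ} {m n : ι}
    {v w : TensorAlgebra R V} (hv : IsWord 𝒱 p m v) (hw : IsWord 𝒱 q n w) :
    IsWord 𝒱 (p + q) (m + n) (v * w) := by
  induction hv with
  | one => simpa using hw
  | cons hu _ ih => simpa only [mul_assoc, add_assoc, add_right_comm _ 1 q] using ih.cons hu

theorem IsWord.eq_zero {𝒱 : ℤ → Submodule R V} (h𝒱 : ∀ n < 1, 𝒱 n = ⊥) {p : ℕ} {n : ℤ}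
    {w : TensorAlgebra R V} (hw : IsWord 𝒱 p n w) (hn : n < p) : w = 0 := by
  induction hw with
  | one => omega
  | @cons m n p v w hv _ ih =>
    rcases lt_or_ge m 1 with hm | hm
    · have hv0 : v = 0 := by simpa [h𝒱 m hm] using hv
      rw [hv0, map_zero, zero_mul]
    · rw [ih (by omega), mul_zero]

/-- The tensors of degree `n` and word length at least `p`, as a family indexed by `(p, n)`. -/
def wordFil [AddCommMonoid ι] (𝒱 : ι → Submodule R V) (i : ℕ × ι) :
    Submodule R (TensorAlgebra R V) :=
  Submodule.span R {w | ∃ p, i.1 ≤ p ∧ IsWord 𝒱 p i.2 w}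

/-- The grading of the tensor algebra by total degree. -/
def wordGrading [AddCommMonoid ι] (𝒱 : ι → Submodule R V) (n : ι) :
    Submodule R (TensorAlgebra R V) :=
  wordFil 𝒱 (0, n)

section AddCommMonoid

variable [AddCommMonoid ι] {𝒱 : ι → Submodule R V}

theorem IsWord.mem_wordGrading {p : ℕ} {n : ι} {w : TensorAlgebra R V} (hw : IsWord 𝒱 p n w) :
    w ∈ wordGrading 𝒱 n :=
  Submodule.subset_span ⟨p, p.zero_le, hw⟩

theorem ι_mem_wordFil {n : ι} {v : V} (hv : v ∈ 𝒱 n) : TensorAlgebra.ι R v ∈ wordFil 𝒱 (1, n) :=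
  Submodule.subset_span ⟨1, le_rfl, by simpa using IsWord.one.cons hv⟩

theorem antitone_wordFil (n : ι) : Antitone fun p => wordFil 𝒱 (p, n) :=
  fun _ _ h => Submodule.span_mono fun _ ⟨r, hr, hw⟩ => ⟨r, h.trans hr, hw⟩

instance gradedMonoid_wordFil (𝒱 : ι → Submodule R V) : SetLike.GradedMonoid (wordFil 𝒱) where
  one_mem := Submodule.subset_span ⟨0, le_rfl, .one⟩
  mul_mem i j x y hx hy := by
    have hmul : wordFil 𝒱 i * wordFil 𝒱 j ≤ wordFil 𝒱 (i + j) := by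
      simp only [wordFil, Submodule.span_mul_span]
      refine Submodule.span_mono ?_
      rintro _ ⟨v, ⟨p, hp, hv⟩, w, ⟨q, hq, hw⟩, rfl⟩
      exact ⟨p + q, add_le_add hp hq, hv.mul hw⟩
    exact hmul (Submodule.mul_mem_mul hx hy)

instance gradedMonoid_wordGrading (𝒱 : ι → Submodule R V) :
    SetLike.GradedMonoid (wordGrading 𝒱) where
  one_mem := SetLike.GradedOne.one_mem (A := wordFil 𝒱)
  mul_mem i j x y hx hy := by
    have hxy : x * y ∈ wordFil 𝒱 ((0, i) + (0, j)) := SetLike.mul_mem_graded hx hy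
    rwa [Prod.mk_add_mk, add_zero] at hxy

theorem hasDegree_wordFil_lift {ℬ : ℕ × ι → Submodule R B} [SetLike.GradedMonoid ℬ]
    (hℬ : ∀ n, Antitone fun p => ℬ (p, n)) {L : V →ₗ[R] B} (hL : ∀ n, ∀ v ∈ 𝒱 n, L v ∈ ℬ (1, n)) :
    HasDegree (wordFil 𝒱) ℬ 0 (lift R L).toLinearMap := by
  have word : ∀ {p n w}, IsWord 𝒱 p n w → lift R L w ∈ ℬ (p, n) := fun hw => by
    induction hw with
    | one => rw [map_one]; exact SetLike.GradedOne.one_mem (A := ℬ)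
    | @cons m n p v w hv _ ih =>
      simpa [add_comm 1 p] using SetLike.GradedMul.mul_mem (hL m v hv) ih
  intro i x hx
  rw [add_zero]
  refine Submodule.span_le (p := (ℬ i).comap (lift R L).toLinearMap) |>.2 ?_ hx
  rintro w ⟨p, hp, hw⟩
  exact hℬ i.2 hp (word hw)

theorem hasDegree_wordGrading_lift {ℬ : ι → Submodule R B} [SetLike.GradedMonoid ℬ] {L : V →ₗ[R] B}
    (hL : ∀ n, ∀ v ∈ 𝒱 n, L v ∈ ℬ n) :
    HasDegree (wordGrading 𝒱) ℬ 0 (lift R L).toLinearMap := by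
  have : SetLike.GradedMonoid fun i : ℕ × ι => ℬ i.2 :=
    { one_mem := SetLike.GradedOne.one_mem (A := ℬ)
      mul_mem := fun _ _ _ _ hx hy => SetLike.GradedMul.mul_mem (A := ℬ) hx hy }
  exact fun _ _ hx =>
    hasDegree_wordFil_lift (ℬ := fun i : ℕ × ι => ℬ i.2) (fun _ _ _ _ => le_rfl) hL hx

theorem IsSkewDerivation.hasDegree_wordFil {ℬ : ℕ × ι → Submodule R B} [SetLike.GradedMonoid ℬ]
    (hℬ : ∀ n, Antitone fun p => ℬ (p, n)) {f g : TensorAlgebra R V →ₐ[R] B}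
    {D : TensorAlgebra R V →ₗ[R] B} (hD : IsSkewDerivation f g D)
    (hf : HasDegree (wordFil 𝒱) ℬ 0 f.toLinearMap) (hg : HasDegree (wordFil 𝒱) ℬ 0 g.toLinearMap)
    {k : ℕ × ι} (hDι : ∀ n, ∀ v ∈ 𝒱 n, D (TensorAlgebra.ι R v) ∈ ℬ ((1, n) + k)) :
    HasDegree (wordFil 𝒱) ℬ k D := by
  have word : ∀ {p n w}, IsWord 𝒱 p n w → D w ∈ ℬ ((p, n) + k) := fun hw => by
    induction hw with
    | one => rw [hD.map_one]; exact zero_mem _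
    | @cons m n p v w hv hw ih =>
      have hfv : f (TensorAlgebra.ι R v) ∈ ℬ (1, m) := hf.mem (ι_mem_wordFil hv)
      have hgw : g w ∈ ℬ (p, n) := hg.mem (Submodule.subset_span ⟨p, le_rfl, hw⟩)
      have hindex : ((p + 1, m + n) : ℕ × ι) = (1, m) + (p, n) := by simp [add_comm]
      rw [hD, hindex]
      refine add_mem ?_ ?_
      · rw [add_assoc]; exact SetLike.GradedMul.mul_mem hfv ih
      · rw [add_right_comm]; exact SetLike.GradedMul.mul_mem (hDι m v hv) hgw
  intro i x hx
  refine Submodule.span_le (p := (ℬ (i + k)).comap D) |>.2 ?_ hx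
  rintro w ⟨p, hp, hw⟩
  exact hℬ (i.2 + k.2) (add_le_add_left hp k.1) (word hw)

theorem HasDegree.wordGrading_of_wordFil {𝒲 : ι → Submodule R W} {j : ℕ} {k : ι}
    {f : TensorAlgebra R V →ₗ[R] TensorAlgebra R W}
    (hf : HasDegree (wordFil 𝒱) (wordFil 𝒲) (j, k) f) :
    HasDegree (wordGrading 𝒱) (wordGrading 𝒲) k f := fun n x hx => by
  have hfx : f x ∈ wordFil 𝒲 ((0, n) + (j, k)) := hf hx
  exact antitone_wordFil (n + k) (Nat.zero_le (0 + j)) (by simpa only [Prod.mk_add_mk] using hfx)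

end AddCommMonoid

section GradedAlgebra

open DirectSum

variable [AddCommMonoid ι] [DecidableEq ι] (𝒱 : ι → Submodule R V) [Decomposition 𝒱]

/-- The decomposition of tensors into homogeneous components. -/
def wordDecompose : TensorAlgebra R V →ₐ[R] ⨁ n, wordGrading 𝒱 n :=
  lift R (toModule R ι _ (fun n => lof R ι (fun n => wordGrading 𝒱 n) n ∘ₗ
    ((TensorAlgebra.ι R).restrict fun _ hv => antitone_wordFil n zero_le_one (ι_mem_wordFil hv))) ∘ₗ
      (decomposeLinearEquiv 𝒱).toLinearMap)

variable {𝒱}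

theorem wordDecompose_ι {n : ι} {v : V} (hv : v ∈ 𝒱 n) : wordDecompose 𝒱 (TensorAlgebra.ι R v) =
    of (fun n => wordGrading 𝒱 n) n
      ⟨TensorAlgebra.ι R v, antitone_wordFil n zero_le_one (ι_mem_wordFil hv)⟩ := by
  simp only [wordDecompose, lift_ι_apply, LinearMap.comp_apply, LinearEquiv.coe_coe,
    decomposeLinearEquiv_apply, decompose_of_mem 𝒱 hv, ← lof_eq_of R, toModule_lof]
  rfl

theorem wordDecompose_of_mem {n : ι} {x : TensorAlgebra R V} (hx : x ∈ wordGrading 𝒱 n) :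
    wordDecompose 𝒱 x = of (fun n => wordGrading 𝒱 n) n ⟨x, hx⟩ := by
  have word : ∀ {p n w} (hw : IsWord 𝒱 p n w),
      wordDecompose 𝒱 w = of (fun n => wordGrading 𝒱 n) n ⟨w, hw.mem_wordGrading⟩ := fun hw => by
    induction hw with
    | one => rw [map_one]; rfl
    | cons hv _ ih => rw [map_mul, wordDecompose_ι hv, ih, of_mul_of]; rfl
  induction hx using Submodule.span_induction with
  | mem w hw => obtain ⟨p, -, hw⟩ := hw; exact word hw
  | zero => rw [map_zero]; exact (map_zero _).symm
  | add x y hx hy ihx ihy => rw [map_add, ihx, ihy, ← map_add]; rfl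
  | smul r x hx ih => rw [map_smul, ih, ← lof_eq_of R, ← map_smul]; rfl

instance gradedAlgebra_wordGrading : GradedAlgebra (wordGrading 𝒱) :=
  GradedAlgebra.ofAlgHom _ (wordDecompose 𝒱)
    (hom_ext <| linearMap_ext_homogeneous 𝒱 fun n v hv => by simp [wordDecompose_ι hv])
    fun n x => wordDecompose_of_mem x.2

end GradedAlgebra

theorem isBoundedFiltration_wordFil {𝒱 : ℤ → Submodule R V} [DirectSum.Decomposition 𝒱]
    (h𝒱 : ∀ n < 1, 𝒱 n = ⊥) :
    IsBoundedFiltration (wordFil 𝒱) where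
  antitone := antitone_wordFil
  eq_bot hn := Submodule.span_eq_bot.2 fun _ ⟨_, hq, hw⟩ =>
    hw.eq_zero h𝒱 (hn.trans_le (Int.ofNat_le.2 hq))
  iSup_eq_top := (DirectSum.Decomposition.isInternal (wordGrading 𝒱)).submodule_iSup_eq_top

end Words

section Parity

variable {V W A : Type} [AddCommGroup V] [Module ℚ V] [AddCommGroup W] [Module ℚ W]
  [Ring A] [Algebra ℚ A] {𝒱 : ℤ → Submodule ℚ V} {𝒲 : ℤ → Submodule ℚ W}
  [DirectSum.Decomposition 𝒱] [DirectSum.Decomposition 𝒲]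

theorem parityOf_of_mem {n : ℤ} {x : V} (hx : x ∈ 𝒱 n) : parityOf 𝒱 x = (-1 : ℚ) ^ n • x := by
  simp only [parityOf, signOpOf, LinearMap.comp_apply, LinearEquiv.coe_coe,
    DirectSum.decomposeLinearEquiv_apply, DirectSum.decompose_of_mem 𝒱 hx, ← DirectSum.lof_eq_of ℚ,
    DirectSum.toModule_lof, LinearMap.smul_apply, Submodule.subtype_apply, one_mul]

variable (𝒱) in
theorem hasDegree_parityOf : HasDegree 𝒱 𝒱 0 (parityOf 𝒱) := fun i x hx => by
  rw [parityOf_of_mem hx, add_zero]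
  exact Submodule.smul_mem _ _ hx

variable (𝒱) in
theorem parityOf_comp_self : parityOf 𝒱 ∘ₗ parityOf 𝒱 = .id :=
  linearMap_ext_homogeneous 𝒱 fun n x hx => by
    have hsign : (-1 : ℚ) ^ n * (-1) ^ n = 1 := by rw [← mul_zpow]; norm_num
    simp [parityOf_of_mem hx, smul_smul, hsign]

theorem HasDegree.comp_parityOf {k : ℤ} {f : V →ₗ[ℚ] W} (hf : HasDegree 𝒱 𝒲 k f) :
    f ∘ₗ parityOf 𝒱 = (-1 : ℚ) ^ k • (parityOf 𝒲 ∘ₗ f) :=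
  linearMap_ext_homogeneous 𝒱 fun n x hx => by
    have hsign : (-1 : ℚ) ^ k * (-1) ^ k = 1 := by rw [← mul_zpow]; norm_num
    simp only [LinearMap.comp_apply, LinearMap.smul_apply, parityOf_of_mem hx,
      parityOf_of_mem (hf hx), map_smul, smul_smul, zpow_add₀ (show (-1 : ℚ) ≠ 0 by norm_num)]
    rw [mul_left_comm, hsign, mul_one]

theorem HasDegree.comp_parityOf_of_even {k : ℤ} {f : V →ₗ[ℚ] W} (hf : HasDegree 𝒱 𝒲 k f)
    (hk : Even k) : f ∘ₗ parityOf 𝒱 = parityOf 𝒲 ∘ₗ f := by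
  simpa [hk.neg_one_zpow] using hf.comp_parityOf

theorem HasDegree.comp_parityOf_of_odd {k : ℤ} {f : V →ₗ[ℚ] W} (hf : HasDegree 𝒱 𝒲 k f)
    (hk : Odd k) : f ∘ₗ parityOf 𝒱 = -(parityOf 𝒲 ∘ₗ f) := by
  simpa [hk.neg_one_zpow] using hf.comp_parityOf

variable (𝒜 : ℤ → Submodule ℚ A) [GradedAlgebra 𝒜]

/-- The parity automorphism `x ↦ (-1)^|x| x` of a graded algebra. -/
def parityAlgHom : A →ₐ[ℚ] A :=
  .ofLinearMap (parityOf 𝒜)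
    (by rw [parityOf_of_mem (SetLike.GradedOne.one_mem (A := 𝒜)), zpow_zero, one_smul])
    (LinearMap.map_mul_iff _ |>.2 <|
      linearMap_ext_homogeneous 𝒜 fun i x hx => linearMap_ext_homogeneous 𝒜 fun j y hy => by
        simp [parityOf_of_mem hx, parityOf_of_mem hy,
          parityOf_of_mem (SetLike.GradedMul.mul_mem hx hy), smul_smul,
          zpow_add₀ (show (-1 : ℚ) ≠ 0 by norm_num), mul_comm])

@[simp]
theorem parityAlgHom_toLinearMap : (parityAlgHom 𝒜).toLinearMap = parityOf 𝒜 := rfl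

theorem parityAlgHom_comp_self : (parityAlgHom 𝒜).comp (parityAlgHom 𝒜) = .id ℚ A :=
  AlgHom.toLinearMap_injective (parityOf_comp_self 𝒜)

end Parity

section TensorAlgebraMap

variable {R V W X ι : Type*} [CommRing R] [AddCommGroup V] [Module R V] [AddCommGroup W]
  [Module R W] [AddCommGroup X] [Module R X]

/-- The algebra map between tensor algebras induced by a linear map. -/
def tensorAlgebraMap (f : V →ₗ[R] W) : TensorAlgebra R V →ₐ[R] TensorAlgebra R W :=
  TensorAlgebra.lift R (TensorAlgebra.ι R ∘ₗ f)

@[simp]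
theorem tensorAlgebraMap_ι (f : V →ₗ[R] W) (v : V) :
    tensorAlgebraMap f (TensorAlgebra.ι R v) = TensorAlgebra.ι R (f v) := by
  simp [tensorAlgebraMap]

theorem tensorAlgebraMap_comp (g : W →ₗ[R] X) (f : V →ₗ[R] W) :
    tensorAlgebraMap (g ∘ₗ f) = (tensorAlgebraMap g).comp (tensorAlgebraMap f) :=
  TensorAlgebra.hom_ext <| LinearMap.ext fun v => by simp

theorem hasDegree_tensorAlgebraMap [AddCommMonoid ι] {𝒱 : ι → Submodule R V}
    {𝒲 : ι → Submodule R W} {f : V →ₗ[R] W} (hf : HasDegree 𝒱 𝒲 0 f) :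
    HasDegree (wordFil 𝒱) (wordFil 𝒲) 0 (tensorAlgebraMap f).toLinearMap :=
  hasDegree_wordFil_lift antitone_wordFil fun _ _ hv => ι_mem_wordFil (hf.mem hv)

end TensorAlgebraMap

section FreeDerivation

variable {V : Type} [AddCommGroup V] [Module ℚ V] (𝒱 : ℤ → Submodule ℚ V)
  [DirectSum.Decomposition 𝒱]

/-- The parity automorphism of the tensor algebra of a graded vector space. -/
abbrev wordParity : TensorAlgebra ℚ V →ₐ[ℚ] TensorAlgebra ℚ V :=
  parityAlgHom (wordGrading 𝒱)

theorem hasDegree_wordParity : HasDegree (wordFil 𝒱) (wordFil 𝒱) 0 (wordParity 𝒱).toLinearMap := by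
  rintro ⟨p, n⟩ x hx
  rw [add_zero, parityAlgHom_toLinearMap,
    parityOf_of_mem (𝒱 := wordGrading 𝒱) (antitone_wordFil n p.zero_le hx)]
  exact Submodule.smul_mem _ _ hx

/-- The derivation (in the graded sense) of odd degree of the tensor algebra with prescribed values
on generators. -/
def freeDer (L : V →ₗ[ℚ] TensorAlgebra ℚ V) : TensorAlgebra ℚ V →ₗ[ℚ] TensorAlgebra ℚ V :=
  skewDer (wordParity 𝒱) (.id ℚ _) L

variable {𝒱}

theorem hasDegree_freeDer {k : ℕ × ℤ} {L : V →ₗ[ℚ] TensorAlgebra ℚ V}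
    (hL : ∀ n, ∀ v ∈ 𝒱 n, L v ∈ wordFil 𝒱 ((1, n) + k)) :
    HasDegree (wordFil 𝒱) (wordFil 𝒱) k (freeDer 𝒱 L) :=
  (isSkewDerivation_skewDer _ _ L).hasDegree_wordFil antitone_wordFil (hasDegree_wordParity 𝒱) .id
    fun n v hv => by rw [skewDer_ι]; exact hL n v hv

variable {W : Type} [AddCommGroup W] [Module ℚ W] {𝒲 : ℤ → Submodule ℚ W}
  [DirectSum.Decomposition 𝒲] {D : TensorAlgebra ℚ V →ₗ[ℚ] TensorAlgebra ℚ W} {j : ℕ} {k : ℤ}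

theorem HasDegree.comp_wordParity_of_even (hD : HasDegree (wordFil 𝒱) (wordFil 𝒲) (j, k) D)
    (hk : Even k) : D ∘ₗ (wordParity 𝒱).toLinearMap = (wordParity 𝒲).toLinearMap ∘ₗ D :=
  hD.wordGrading_of_wordFil.comp_parityOf_of_even hk

theorem HasDegree.comp_wordParity_of_odd (hD : HasDegree (wordFil 𝒱) (wordFil 𝒲) (j, k) D)
    (hk : Odd k) : D ∘ₗ (wordParity 𝒱).toLinearMap = -((wordParity 𝒲).toLinearMap ∘ₗ D) :=
  hD.wordGrading_of_wordFil.comp_parityOf_of_odd hk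

end FreeDerivation

section QuasiFree

/-- The differential on the tensor algebra of a complex extending the given one as a derivation. -/
def DGVect.freeDiff (V : DGVect) : TensorAlgebra ℚ V.carrier →ₗ[ℚ] TensorAlgebra ℚ V.carrier :=
  freeDer V.grading (TensorAlgebra.ι ℚ ∘ₗ V.d)

variable {V W : DGVect}

@[simp]
theorem DGVect.freeDiff_ι (V : DGVect) (v : V.carrier) :
    V.freeDiff (TensorAlgebra.ι ℚ v) = TensorAlgebra.ι ℚ (V.d v) :=
  skewDer_ι _ _ _ v

theorem DGVect.isSkewDerivation_freeDiff (V : DGVect) :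
    IsSkewDerivation (wordParity V.grading) (.id ℚ _) V.freeDiff :=
  isSkewDerivation_skewDer _ _ _

theorem DGVect.hasDegree_freeDiff (V : DGVect) :
    HasDegree (wordFil V.grading) (wordFil V.grading) (0, -1) V.freeDiff :=
  hasDegree_freeDer fun _ _ hv => ι_mem_wordFil (V.hasDegree_d hv)

theorem freeDiff_comp_tensorAlgebraMap {f : V.carrier →ₗ[ℚ] W.carrier}
    (hdeg : HasDegree V.grading W.grading 0 f) (hf : f ∘ₗ V.d = W.d ∘ₗ f) :
    W.freeDiff ∘ₗ (tensorAlgebraMap f).toLinearMap =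
      (tensorAlgebraMap f).toLinearMap ∘ₗ V.freeDiff := by
  have hparity : (tensorAlgebraMap f).comp (wordParity V.grading) =
      (wordParity W.grading).comp (tensorAlgebraMap f) :=
    AlgHom.toLinearMap_injective ((hasDegree_tensorAlgebraMap hdeg).comp_wordParity_of_even .zero)
  refine (W.isSkewDerivation_freeDiff.comp_algHom _).tensorAlgebra_ext
    (hparity ▸ V.isSkewDerivation_freeDiff.algHom_comp (tensorAlgebraMap f)) fun v => ?_
  simpa using congrArg (TensorAlgebra.ι ℚ) (LinearMap.congr_fun hf v).symm

theorem exists_homotopy_tensorAlgebraMap {e a : V.carrier →ₗ[ℚ] V.carrier}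
    (he : HasDegree V.grading V.grading 0 e) (ha : HasDegree V.grading V.grading 1 a)
    (hed : e ∘ₗ V.d = V.d ∘ₗ e) (h : V.d ∘ₗ a + a ∘ₗ V.d = e - .id) :
    ∃ H, HasDegree (wordFil V.grading) (wordFil V.grading) (0, 1) H ∧
      V.freeDiff ∘ₗ H + H ∘ₗ V.freeDiff = (tensorAlgebraMap e).toLinearMap - .id := by
  set σ := wordParity V.grading
  set τ := σ.comp (tensorAlgebraMap e)
  have hτ : HasDegree (wordFil V.grading) (wordFil V.grading) 0 τ.toLinearMap :=
    (hasDegree_wordParity V.grading).comp (hasDegree_tensorAlgebraMap he) (add_zero 0)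
  have hH := isSkewDerivation_skewDer τ (.id ℚ _) (TensorAlgebra.ι ℚ ∘ₗ a)
  set H := skewDer τ (.id ℚ _) (TensorAlgebra.ι ℚ ∘ₗ a)
  have hHdeg : HasDegree (wordFil V.grading) (wordFil V.grading) (0, 1) H :=
    hH.hasDegree_wordFil antitone_wordFil hτ .id fun _ _ hv => by
      rw [skewDer_ι]; exact ι_mem_wordFil (ha hv)
  have hτσ : τ.comp σ = σ.comp τ :=
    AlgHom.toLinearMap_injective (hτ.comp_wordParity_of_even .zero)
  have hστ : σ.comp τ = tensorAlgebraMap e := by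
    rw [← AlgHom.comp_assoc, parityAlgHom_comp_self, AlgHom.id_comp]
  have hdτ : V.freeDiff ∘ₗ τ.toLinearMap = -(τ.toLinearMap ∘ₗ V.freeDiff) := by
    rw [AlgHom.comp_toLinearMap, ← LinearMap.comp_assoc,
      V.hasDegree_freeDiff.comp_wordParity_of_odd (by decide), LinearMap.neg_comp,
      LinearMap.comp_assoc, freeDiff_comp_tensorAlgebraMap he hed, LinearMap.comp_assoc]
  have hHσ : H ∘ₗ σ.toLinearMap = -(σ.toLinearMap ∘ₗ H) := hHdeg.comp_wordParity_of_odd odd_one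
  refine ⟨H, hHdeg, ?_⟩
  refine (V.isSkewDerivation_freeDiff.anticommutator hH hτσ hdτ hHσ).tensorAlgebra_ext
    (hστ ▸ IsSkewDerivation.algHom_sub _ (.id ℚ _)) fun v => ?_
  have hv : V.d (a v) + a (V.d v) = e v - v := LinearMap.congr_fun h v
  simp [H, ← map_add, hv]

-- The differentials agree with the free ones up to terms raising the word length, so that the
-- tensor algebra of a homotopy inverse of `f` inverts the induced map up to such terms.
theorem isQuasiIso_tensorAlgebraMap {f : V.carrier →ₗ[ℚ] W.carrier}
    (hV : ∀ n < 1, V.grading n = ⊥) (hW : ∀ n < 1, W.grading n = ⊥)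
    (hq : IsQuasiIso V.d W.d f) (hdeg : HasDegree V.grading W.grading 0 f)
    (hf : f ∘ₗ V.d = W.d ∘ₗ f) {dV : TensorAlgebra ℚ V.carrier →ₗ[ℚ] TensorAlgebra ℚ V.carrier}
    {dW : TensorAlgebra ℚ W.carrier →ₗ[ℚ] TensorAlgebra ℚ W.carrier} (hdV : dV ∘ₗ dV = 0)
    (hdW : dW ∘ₗ dW = 0)
    (hVfree : HasDegree (wordFil V.grading) (wordFil V.grading) (1, -1) (dV - V.freeDiff))
    (hWfree : HasDegree (wordFil W.grading) (wordFil W.grading) (1, -1) (dW - W.freeDiff))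
    (hfd : (tensorAlgebraMap f).toLinearMap ∘ₗ dV = dW ∘ₗ (tensorAlgebraMap f).toLinearMap) :
    IsQuasiIso dV dW (tensorAlgebraMap f).toLinearMap := by
  obtain ⟨g, a, b, hgdeg, ha, hb, hgd, hgf, hfg⟩ := hq.exists_graded_homotopyInverse hdeg hf
  obtain ⟨HV, hHVdeg, hHV⟩ := exists_homotopy_tensorAlgebraMap (hgdeg.comp hdeg (add_zero 0)) ha
    (by rw [LinearMap.comp_assoc, hf, ← LinearMap.comp_assoc, hgd, LinearMap.comp_assoc]) hgf
  obtain ⟨HW, hHWdeg, hHW⟩ := exists_homotopy_tensorAlgebraMap (hdeg.comp hgdeg (add_zero 0)) hb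
    (by rw [LinearMap.comp_assoc, hgd, ← LinearMap.comp_assoc, hf, LinearMap.comp_assoc]) hfg
  rw [tensorAlgebraMap_comp, AlgHom.comp_toLinearMap] at hHV hHW
  have hTg := hasDegree_tensorAlgebraMap hgdeg
  have hgd_eq : dV ∘ₗ (tensorAlgebraMap g).toLinearMap - (tensorAlgebraMap g).toLinearMap ∘ₗ dW =
      (dV - V.freeDiff) ∘ₗ (tensorAlgebraMap g).toLinearMap -
        (tensorAlgebraMap g).toLinearMap ∘ₗ (dW - W.freeDiff) := by
    rw [LinearMap.sub_comp, LinearMap.comp_sub, freeDiff_comp_tensorAlgebraMap hgdeg hgd,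
      sub_sub_sub_cancel_right]
  refine isQuasiIso_of_filtered_homotopyInverse (isBoundedFiltration_wordFil hV)
    (isBoundedFiltration_wordFil hW) hdV hdW hfd (hasDegree_tensorAlgebraMap hdeg) hHVdeg hHWdeg
    (g := (tensorAlgebraMap g).toLinearMap) ?_ ?_ ?_
  · rw [hgd_eq]
    exact (hVfree.comp hTg (zero_add _)).sub (hTg.comp hWfree (add_zero _))
  · rw [← hHV, add_sub_add_comm, ← LinearMap.sub_comp, ← LinearMap.comp_sub]
    exact (hVfree.comp hHVdeg rfl).add (hHVdeg.comp hVfree rfl)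
  · rw [← hHW, add_sub_add_comm, ← LinearMap.sub_comp, ← LinearMap.comp_sub]
    exact (hWfree.comp hHWdeg rfl).add (hHWdeg.comp hWfree rfl)

end QuasiFree

section GradedRetract

variable {R ι M N : Type*} [Ring R] [AddCommGroup M] [Module R M] [AddCommGroup N] [Module R N]

theorem iSupIndep_comap {i : M →ₗ[R] N} (hi : Function.Injective i) {p : ι → Submodule R N}
    (hp : iSupIndep p) : iSupIndep fun n => (p n).comap i := fun n => by
  have hle : (⨆ j, ⨆ (_ : j ≠ n), (p j).comap i).map i ≤ ⨆ j, ⨆ (_ : j ≠ n), p j := by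
    simp only [Submodule.map_iSup]
    exact iSup₂_mono fun j _ => Submodule.map_comap_le i (p j)
  refine Submodule.disjoint_def.2 fun x hx hx' => hi ?_
  rw [map_zero]
  exact Submodule.disjoint_def.1 (hp n) _ hx (hle (Submodule.mem_map_of_mem hx'))

theorem isInternal_comap_of_retract [DecidableEq ι] {i : M →ₗ[R] N} {r : N →ₗ[R] M}
    (hri : r ∘ₗ i = .id) {p : ι → Submodule R N} (hp : DirectSum.IsInternal p)
    (hir : ∀ n, ∀ x ∈ p n, i (r x) ∈ p n) :
    DirectSum.IsInternal fun n => (p n).comap i := by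
  have hinv : Function.LeftInverse r i := LinearMap.congr_fun hri
  refine DirectSum.isInternal_submodule_of_iSupIndep_of_iSup_eq_top
    (iSupIndep_comap hinv.injective hp.submodule_iSupIndep) (eq_top_iff.2 fun x _ => ?_)
  have hx : r (i x) ∈ (⨆ n, p n).map r :=
    Submodule.mem_map_of_mem (hp.submodule_iSup_eq_top ▸ Submodule.mem_top)
  rw [hinv x, Submodule.map_iSup] at hx
  exact iSup_mono (fun n => Submodule.map_le_iff_le_comap.2 (hir n)) hx

theorem isInternal_comp_equiv {κ : Type*} [DecidableEq ι] [DecidableEq κ] {p : ι → Submodule R N}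
    (hp : DirectSum.IsInternal p) (e : κ ≃ ι) : DirectSum.IsInternal fun k => p (e k) :=
  DirectSum.isInternal_submodule_of_iSupIndep_of_iSup_eq_top
    (hp.submodule_iSupIndep.comp e.injective) (e.iSup_comp.trans hp.submodule_iSup_eq_top)

end GradedRetract

section Reduced

namespace CoaugDGCoalgebra

variable (C : CoaugDGCoalgebra)

theorem d_one : C.d C.one = 0 := by
  have h := C.d_mem 0 C.one C.one_mem
  rwa [C.nonneg _ (by norm_num), Submodule.mem_bot] at h

/-- The projection `c ↦ c - ε(c) 1` of a coaugmented coalgebra onto the kernel of its counit. -/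
def kerCounitProj : C.carrier →ₗ[ℚ] C.counit.ker :=
  (LinearMap.id - C.counit.smulRight C.one).codRestrict _ fun c => by simp [C.counit_one]

theorem coe_kerCounitProj (c : C.carrier) :
    (C.kerCounitProj c : C.carrier) = c - C.counit c • C.one := rfl

theorem kerCounitProj_comp_subtype : C.kerCounitProj ∘ₗ C.counit.ker.subtype = .id :=
  LinearMap.ext fun v => Subtype.ext <| by simp [coe_kerCounitProj, LinearMap.mem_ker.1 v.2]

theorem coe_kerCounitProj_mem {n : ℤ} {c : C.carrier} (hc : c ∈ C.grading n) :
    (C.kerCounitProj c : C.carrier) ∈ C.grading n := by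
  rw [coe_kerCounitProj]
  obtain rfl | hn := eq_or_ne n 0
  · exact sub_mem hc (Submodule.smul_mem _ _ C.one_mem)
  · rwa [C.counit_zero n hn c hc, zero_smul, sub_zero]

/-- The desuspended reduced complex `C̄[1]` of a coaugmented dg coalgebra, with the sign rule
`d(tc) = -t(dc)`. The cokernel of the coaugmentation is modelled by the kernel of the counit. -/
def reduced : DGVect where
  carrier := C.counit.ker
  grading n := (C.grading (n + 1)).comap C.counit.ker.subtype
  isDecomp := (isInternal_comap_of_retract C.kerCounitProj_comp_subtype
    (isInternal_comp_equiv (DirectSum.Decomposition.isInternal C.grading) (Equiv.addRight 1))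
    fun _ _ hc => C.coe_kerCounitProj_mem hc).chooseDecomposition
  d := -C.d.restrict fun c _ => LinearMap.congr_fun C.counit_chain c
  d_mem n c hc := neg_mem <| by
    have h := C.d_mem _ _ hc
    rwa [add_sub_right_comm] at h
  d_sq := LinearMap.ext fun c => Subtype.ext <| by
    change -C.d (-C.d c) = 0
    rw [map_neg, neg_neg]
    exact LinearMap.congr_fun C.d_sq c

/-- The inclusion `C̄[1] → C`. -/
def reducedIncl : C.reduced.carrier →ₗ[ℚ] C.carrier := C.counit.ker.subtype

/-- The projection `C → C̄[1]`, written `t` before passing to the tensor algebra. -/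
def reducedProj : C.carrier →ₗ[ℚ] C.reduced.carrier := C.kerCounitProj

theorem reducedProj_comp_reducedIncl : C.reducedProj ∘ₗ C.reducedIncl = .id :=
  C.kerCounitProj_comp_subtype

theorem reducedIncl_reducedProj (c : C.carrier) :
    C.reducedIncl (C.reducedProj c) = c - C.counit c • C.one := rfl

theorem reducedProj_one : C.reducedProj C.one = 0 :=
  Subtype.ext <| by
    change C.one - C.counit C.one • C.one = 0
    rw [C.counit_one, one_smul, sub_self]

theorem reducedProj_mem {n : ℤ} {c : C.carrier} (hc : c ∈ C.grading n) :
    C.reducedProj c ∈ C.reduced.grading (n - 1) := by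
  change (C.kerCounitProj c : C.carrier) ∈ C.grading (n - 1 + 1)
  rw [sub_add_cancel]
  exact C.coe_kerCounitProj_mem hc

theorem reducedIncl_comp_d : C.reducedIncl ∘ₗ C.reduced.d = -C.d ∘ₗ C.reducedIncl := rfl

theorem reducedProj_comp_d : C.reducedProj ∘ₗ C.d = -C.reduced.d ∘ₗ C.reducedProj :=
  LinearMap.ext fun c => Subtype.ext <| by
    have hc : C.counit (C.d c) = 0 := LinearMap.congr_fun C.counit_chain c
    change C.d c - C.counit (C.d c) • C.one = - -C.d (c - C.counit c • C.one)
    rw [hc, zero_smul, sub_zero, neg_neg, map_sub, map_smul, C.d_one, smul_zero, sub_zero]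

theorem TwoReduced.reduced_grading_eq_bot {C : CoaugDGCoalgebra} (hC : C.TwoReduced) :
    ∀ n < 1, C.reduced.grading n = ⊥ := by
  refine fun n hn => (Submodule.eq_bot_iff _).2 fun c hc => Subtype.ext ?_
  replace hc : C.reducedIncl c ∈ C.grading (n + 1) := hc
  change C.reducedIncl c = 0
  obtain hneg | rfl | rfl : n + 1 < 0 ∨ n = -1 ∨ n = 0 := by lia
  · rwa [C.nonneg _ hneg, Submodule.mem_bot] at hc
  · rw [neg_add_cancel, hC.1, Submodule.mem_span_singleton] at hc
    obtain ⟨a, ha⟩ := hc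
    have hcounit : C.counit (a • C.one) = 0 := ha ▸ c.2
    rw [map_smul, C.counit_one, smul_eq_mul, mul_one] at hcounit
    rw [← ha, hcounit, zero_smul]
  · rwa [zero_add, hC.2, Submodule.mem_bot] at hc

end CoaugDGCoalgebra

theorem IsQuasiIso.neg {V W : Type} [AddCommGroup V] [Module ℚ V] [AddCommGroup W] [Module ℚ W]
    {dV : V →ₗ[ℚ] V} {dW : W →ₗ[ℚ] W} {f : V →ₗ[ℚ] W} (h : IsQuasiIso dV dW f) :
    IsQuasiIso (-dV) (-dW) f := by
  refine ⟨fun x hx ⟨y, hy⟩ => ?_, fun w hw => ?_⟩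
  · obtain ⟨z, hz⟩ := h.1 x (neg_eq_zero.1 hx) ⟨-y, by simpa using hy⟩
    exact ⟨-z, by simpa using hz⟩
  · obtain ⟨x, hx, y, hy⟩ := h.2 w (neg_eq_zero.1 hw)
    exact ⟨x, neg_eq_zero.2 hx, -y, by simpa using hy⟩

namespace CoaugCoalgebraHom

variable {C D : CoaugDGCoalgebra} (ψ : CoaugCoalgebraHom C D)

/-- The map `C̄[1] → D̄[1]` induced by a morphism of coaugmented dg coalgebras. -/
def reducedMap : C.reduced.carrier →ₗ[ℚ] D.reduced.carrier :=
  D.reducedProj ∘ₗ ψ.toLinearMap ∘ₗ C.reducedIncl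

theorem reducedMap_comp_reducedProj :
    ψ.reducedMap ∘ₗ C.reducedProj = D.reducedProj ∘ₗ ψ.toLinearMap :=
  LinearMap.ext fun c => by
    simp [reducedMap, C.reducedIncl_reducedProj, ψ.map_one, D.reducedProj_one]

theorem reducedIncl_comp_reducedMap :
    D.reducedIncl ∘ₗ ψ.reducedMap = ψ.toLinearMap ∘ₗ C.reducedIncl :=
  LinearMap.ext fun c => by
    have hc : D.counit (ψ.toLinearMap (C.reducedIncl c)) = 0 :=
      (LinearMap.congr_fun ψ.counit_comp _).trans c.2
    simp [reducedMap, D.reducedIncl_reducedProj, hc]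

theorem hasDegree_reducedMap : HasDegree C.reduced.grading D.reduced.grading 0 ψ.reducedMap :=
  fun n c hc => by
    have h := D.reducedProj_mem (ψ.mem _ _ hc)
    rwa [add_sub_cancel_right, ← add_zero n] at h

theorem reducedMap_comp_d : ψ.reducedMap ∘ₗ C.reduced.d = D.reduced.d ∘ₗ ψ.reducedMap := by
  rw [reducedMap, LinearMap.comp_assoc, LinearMap.comp_assoc, C.reducedIncl_comp_d,
    LinearMap.comp_neg, ← LinearMap.comp_assoc _ C.d, ψ.chain, LinearMap.comp_neg,
    LinearMap.comp_assoc, ← LinearMap.comp_assoc _ D.d, D.reducedProj_comp_d, LinearMap.neg_comp,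
    neg_neg, LinearMap.comp_assoc]

theorem isQuasiIso_reducedMap (hψ : IsQuasiIso C.d D.d ψ.toLinearMap) :
    IsQuasiIso C.reduced.d D.reduced.d ψ.reducedMap :=
  hψ.neg.of_retract C.reducedProj_comp_reducedIncl D.reducedProj_comp_reducedIncl
    C.reducedIncl_comp_d (by simp [C.reducedProj_comp_d]) D.reducedIncl_comp_d
    (by simp [D.reducedProj_comp_d]) ψ.reducedIncl_comp_reducedMap.symm
    ψ.reducedMap_comp_reducedProj.symm

end CoaugCoalgebraHom

end Reduced

section Convolution

theorem tensorGrading_le_comap {V W : Type} {X : Type*} [AddCommGroup V] [Module ℚ V]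
    [AddCommGroup W] [Module ℚ W] [AddCommGroup X] [Module ℚ X]
    {𝒱 : ℤ → Submodule ℚ V} {𝒲 : ℤ → Submodule ℚ W}
    {n : ℤ} {N : Submodule ℚ X} {φ : V ⊗[ℚ] W →ₗ[ℚ] X}
    (h : ∀ i j, i + j = n → ∀ v ∈ 𝒱 i, ∀ w ∈ 𝒲 j, φ (v ⊗ₜ w) ∈ N) :
    tensorGrading 𝒱 𝒲 n ≤ N.comap φ := by
  refine iSup_le fun ⟨⟨i, j⟩, hij⟩ => ?_
  rintro _ ⟨z, rfl⟩
  induction z using TensorProduct.induction_on with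
  | zero => simp
  | tmul v w => exact h i j hij v v.2 w w.2
  | add z z' hz hz' => rw [map_add]; exact add_mem hz hz'

namespace DGCoalgebra

variable (C : DGCoalgebra)

instance : Coalgebra ℚ C.carrier where
  comul := C.comul
  counit := C.counit
  coassoc := C.coassoc
  rTensor_counit_comp_comul := LinearMap.ext fun c =>
    (TensorProduct.lid ℚ C.carrier).injective <| by
      simpa [LinearMap.rTensor] using LinearMap.congr_fun C.counit_comul_left c
  lTensor_counit_comp_comul := LinearMap.ext fun c =>
    (TensorProduct.rid ℚ C.carrier).injective <| by
      simpa [LinearMap.lTensor] using LinearMap.congr_fun C.counit_comul_right c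

variable {C} {A B : Type*} [Ring A] [Algebra ℚ A] [Ring B] [Algebra ℚ B]

/-- The convolution product `c ↦ f(c₍₀₎) g(c₍₁₎)`. -/
def conv (f g : C.carrier →ₗ[ℚ] A) : C.carrier →ₗ[ℚ] A :=
  LinearMap.mul' ℚ A ∘ₗ TensorProduct.map f g ∘ₗ C.comul

theorem conv_assoc (f g h : C.carrier →ₗ[ℚ] A) : conv (conv f g) h = conv f (conv g h) :=
  congrArg WithConv.ofConv <|
    mul_assoc (WithConv.toConv f) (WithConv.toConv g) (WithConv.toConv h)

theorem conv_add (f g h : C.carrier →ₗ[ℚ] A) : conv f (g + h) = conv f g + conv f h := by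
  simp only [conv, TensorProduct.map_add_right, LinearMap.add_comp, LinearMap.comp_add]

theorem add_conv (f g h : C.carrier →ₗ[ℚ] A) : conv (f + g) h = conv f h + conv g h := by
  simp only [conv, TensorProduct.map_add_left, LinearMap.add_comp, LinearMap.comp_add]

theorem conv_neg (f g : C.carrier →ₗ[ℚ] A) : conv f (-g) = -conv f g :=
  eq_neg_of_add_eq_zero_left <| by rw [← conv_add, neg_add_cancel]; simp [conv]

theorem neg_conv (f g : C.carrier →ₗ[ℚ] A) : conv (-f) g = -conv f g :=
  eq_neg_of_add_eq_zero_left <| by rw [← add_conv, neg_add_cancel]; simp [conv]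

theorem algHom_comp_conv (φ : A →ₐ[ℚ] B) (f g : C.carrier →ₗ[ℚ] A) :
    φ.toLinearMap ∘ₗ conv f g = conv (φ.toLinearMap ∘ₗ f) (φ.toLinearMap ∘ₗ g) :=
  LinearMap.algHom_comp_convMul_distrib φ (WithConv.toConv f) (WithConv.toConv g)

theorem conv_mem {n : ℤ} {N : Submodule ℚ A} {f g : C.carrier →ₗ[ℚ] A}
    (h : ∀ i j, i + j = n → ∀ x ∈ C.grading i, ∀ y ∈ C.grading j, f x * g y ∈ N)
    {c : C.carrier} (hc : c ∈ C.grading n) : conv f g c ∈ N :=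
  tensorGrading_le_comap (φ := LinearMap.mul' ℚ A ∘ₗ TensorProduct.map f g)
    (fun i j hij x hx y hy => by simpa using h i j hij x hx y hy) (C.comul_mem n c hc)

variable (C) in
theorem comul_comp_parity :
    C.comul ∘ₗ C.parity = TensorProduct.map C.parity C.parity ∘ₗ C.comul :=
  linearMap_ext_homogeneous C.grading fun n c hc => by
    have hle : tensorGrading C.grading C.grading n ≤ LinearMap.ker
        (TensorProduct.map C.parity C.parity - (-1 : ℚ) ^ n • .id) :=
      tensorGrading_le_comap fun i j hij x hx y hy => by
        simp [DGVect.parity, parityOf_of_mem hx, parityOf_of_mem hy, ← hij,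
          ← TensorProduct.smul_tmul', smul_smul, mul_comm,
          zpow_add₀ (show (-1 : ℚ) ≠ 0 by norm_num)]
    have hcomul := sub_eq_zero.1 (hle (C.comul_mem n c hc))
    simpa [DGVect.parity, parityOf_of_mem hc] using hcomul.symm

theorem conv_comp_parity (f g : C.carrier →ₗ[ℚ] A) :
    conv f g ∘ₗ C.parity = conv (f ∘ₗ C.parity) (g ∘ₗ C.parity) := by
  simp only [conv, LinearMap.comp_assoc, C.comul_comp_parity, TensorProduct.map_comp]

theorem conv_comp_d (f g : C.carrier →ₗ[ℚ] A) :
    conv f g ∘ₗ C.d = conv (f ∘ₗ C.d) g + conv (f ∘ₗ C.parity) (g ∘ₗ C.d) := by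
  simp only [conv, LinearMap.comp_assoc, C.comul_chain, LinearMap.add_comp, LinearMap.comp_add,
    ← LinearMap.comp_assoc _ _ (TensorProduct.map f g), ← TensorProduct.map_comp]
  rfl

end DGCoalgebra

end Convolution

open DGCoalgebra (conv)

section TwistingCochain

theorem IsSkewDerivation.comp_conv {C : DGCoalgebra} {A B : Type*} [Ring A] [Algebra ℚ A] [Ring B]
    [Algebra ℚ B] {σ τ : A →ₐ[ℚ] B} {D : A →ₗ[ℚ] B} (hD : IsSkewDerivation σ τ D)
    (f g : C.carrier →ₗ[ℚ] A) : D ∘ₗ conv f g =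
      conv (σ.toLinearMap ∘ₗ f) (D ∘ₗ g) + conv (D ∘ₗ f) (τ.toLinearMap ∘ₗ g) := by
  simp only [conv, ← LinearMap.comp_assoc, ← LinearMap.add_comp]
  congr 1
  exact TensorProduct.ext' fun x y => by simp [hD _ _]

theorem DGVect.parity_comp_parity (V : DGVect) : V.parity ∘ₗ V.parity = .id :=
  parityOf_comp_self V.grading

theorem DGVect.d_comp_parity (V : DGVect) : V.d ∘ₗ V.parity = -(V.parity ∘ₗ V.d) :=
  V.hasDegree_d.comp_parityOf_of_odd (by decide)

theorem comp_comp_eq_zero_of_twisting {C : DGCoalgebra} {A : Type*} [Ring A] [Algebra ℚ A]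
    {σ : A →ₐ[ℚ] A} {D : A →ₗ[ℚ] A} (hD : IsSkewDerivation σ (.id ℚ A) D)
    {t : C.carrier →ₗ[ℚ] A} (hσ : σ.toLinearMap ∘ₗ t = -(t ∘ₗ C.parity))
    (ht : D ∘ₗ t = -(t ∘ₗ C.d) - conv (t ∘ₗ C.parity) t) : D ∘ₗ D ∘ₗ t = 0 := by
  set θ := t ∘ₗ C.parity
  have hθ : θ ∘ₗ C.parity = t := by
    rw [LinearMap.comp_assoc, C.parity_comp_parity, LinearMap.comp_id]
  have hσθ : σ.toLinearMap ∘ₗ θ = -t := by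
    rw [← LinearMap.comp_assoc, hσ, LinearMap.neg_comp, hθ]
  have hDθ : D ∘ₗ θ = θ ∘ₗ C.d - conv t θ := by
    rw [← LinearMap.comp_assoc, ht, LinearMap.sub_comp, LinearMap.neg_comp, LinearMap.comp_assoc,
      C.d_comp_parity, LinearMap.comp_neg, neg_neg, DGCoalgebra.conv_comp_parity, hθ]; rfl
  have hDtd : D ∘ₗ t ∘ₗ C.d = -conv (θ ∘ₗ C.d) t - conv t (t ∘ₗ C.d) := by
    rw [← LinearMap.comp_assoc, ht, LinearMap.sub_comp, LinearMap.neg_comp, LinearMap.comp_assoc,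
      C.d_sq, LinearMap.comp_zero, neg_zero, zero_sub, DGCoalgebra.conv_comp_d, hθ, neg_add']
  rw [ht, LinearMap.comp_sub, LinearMap.comp_neg, hDtd, hD.comp_conv, hσθ, hDθ, ht]
  simp only [sub_eq_add_neg, DGCoalgebra.conv_add, DGCoalgebra.add_conv, DGCoalgebra.conv_neg,
    DGCoalgebra.neg_conv, DGCoalgebra.conv_assoc, AlgHom.toLinearMap_id, LinearMap.id_comp]
  abel

end TwistingCochain

section Cobar

namespace CoaugDGCoalgebra

variable (C : CoaugDGCoalgebra)

/-- The universal map `c ↦ tc` from `C` to the tensor algebra `T(C̄[1])`. -/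
def cobarIncl : C.carrier →ₗ[ℚ] TensorAlgebra ℚ C.reduced.carrier :=
  TensorAlgebra.ι ℚ ∘ₗ C.reducedProj

theorem cobarIncl_one : C.cobarIncl C.one = 0 := by
  simp [cobarIncl, C.reducedProj_one]

theorem cobarIncl_reducedIncl (v : C.reduced.carrier) :
    C.cobarIncl (C.reducedIncl v) = TensorAlgebra.ι ℚ v :=
  congrArg (TensorAlgebra.ι ℚ) (LinearMap.congr_fun C.reducedProj_comp_reducedIncl v)

variable {C} in
theorem cobarIncl_mem {n : ℤ} {c : C.carrier} (hc : c ∈ C.grading n) :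
    C.cobarIncl c ∈ wordFil C.reduced.grading (1, n - 1) :=
  ι_mem_wordFil (C.reducedProj_mem hc)

theorem wordParity_comp_cobarIncl :
    (wordParity C.reduced.grading).toLinearMap ∘ₗ C.cobarIncl = -(C.cobarIncl ∘ₗ C.parity) := by
  have hdeg : HasDegree C.grading (wordGrading C.reduced.grading) (-1) C.cobarIncl :=
    fun n c hc => antitone_wordFil _ zero_le_one (cobarIncl_mem hc)
  rw [DGVect.parity, hdeg.comp_parityOf_of_odd (by decide), neg_neg, parityAlgHom_toLinearMap]

/-- The quadratic term `c ↦ (-1)^|c₍₀₎| tc₍₀₎ · tc₍₁₎` of the cobar differential. -/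
def cobarQuad : C.carrier →ₗ[ℚ] TensorAlgebra ℚ C.reduced.carrier :=
  conv (C.cobarIncl ∘ₗ C.parity) C.cobarIncl

theorem cobarQuad_one : C.cobarQuad C.one = 0 := by
  simp [cobarQuad, conv, C.comul_one, C.cobarIncl_one]

variable {C} in
theorem cobarQuad_mem {n : ℤ} {c : C.carrier} (hc : c ∈ C.grading n) :
    C.cobarQuad c ∈ wordFil C.reduced.grading (2, n - 2) :=
  DGCoalgebra.conv_mem (fun i j hij x hx y hy => by
    have hmul := SetLike.mul_mem_graded (cobarIncl_mem ((hasDegree_parityOf C.grading).mem hx))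
      (cobarIncl_mem hy)
    rwa [Prod.mk_add_mk, ← add_sub_add_comm, hij] at hmul) hc

/-- The cobar differential, determined by `d(tc) = -t(dc) - (-1)^|c₍₀₎| tc₍₀₎ · tc₍₁₎`. -/
def cobarDiff : TensorAlgebra ℚ C.reduced.carrier →ₗ[ℚ] TensorAlgebra ℚ C.reduced.carrier :=
  freeDer C.reduced.grading ((-(C.cobarIncl ∘ₗ C.d) - C.cobarQuad) ∘ₗ C.reducedIncl)

theorem cobarDiff_ι (v : C.reduced.carrier) : C.cobarDiff (TensorAlgebra.ι ℚ v) =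
    -C.cobarIncl (C.d (C.reducedIncl v)) - C.cobarQuad (C.reducedIncl v) :=
  skewDer_ι _ _ _ v

theorem isSkewDerivation_cobarDiff :
    IsSkewDerivation (wordParity C.reduced.grading) (.id ℚ _) C.cobarDiff :=
  isSkewDerivation_skewDer _ _ _

theorem cobarDiff_comp_cobarIncl :
    C.cobarDiff ∘ₗ C.cobarIncl = -(C.cobarIncl ∘ₗ C.d) - C.cobarQuad :=
  LinearMap.ext fun c => by
    simp [cobarIncl, cobarDiff_ι, C.reducedIncl_reducedProj, C.d_one, C.cobarQuad_one]

theorem hasDegree_cobarDiff_sub_freeDiff :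
    HasDegree (wordFil C.reduced.grading) (wordFil C.reduced.grading) (1, -1)
      (C.cobarDiff - C.reduced.freeDiff) := by
  refine (C.isSkewDerivation_cobarDiff.sub C.reduced.isSkewDerivation_freeDiff).hasDegree_wordFil
    antitone_wordFil (hasDegree_wordParity _) .id fun n v hv => ?_
  have hquad : (C.cobarDiff - C.reduced.freeDiff) (TensorAlgebra.ι ℚ v) =
      -C.cobarQuad (C.reducedIncl v) := by
    have hd : TensorAlgebra.ι ℚ (C.reduced.d v) = -C.cobarIncl (C.d (C.reducedIncl v)) := by
      rw [← C.cobarIncl_reducedIncl, ← map_neg]; rfl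
    rw [LinearMap.sub_apply, cobarDiff_ι, DGVect.freeDiff_ι, hd]
    abel
  have hindex : ((1, n) + (1, -1) : ℕ × ℤ) = (2, n + 1 - 2) :=
    Prod.ext rfl (by change n + -1 = n + 1 - 2; ring)
  rw [hquad, hindex]
  exact neg_mem (cobarQuad_mem hv)

theorem hasDegree_cobarDiff :
    HasDegree (wordFil C.reduced.grading) (wordFil C.reduced.grading) (0, -1) C.cobarDiff := by
  rw [← sub_add_cancel C.cobarDiff C.reduced.freeDiff]
  exact .add (fun i x hx => antitone_wordFil _ (Nat.le_succ _)
    (C.hasDegree_cobarDiff_sub_freeDiff hx)) C.reduced.hasDegree_freeDiff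

theorem cobarDiff_comp_cobarDiff : C.cobarDiff ∘ₗ C.cobarDiff = 0 := by
  have hD := C.isSkewDerivation_cobarDiff
  have hodd := C.hasDegree_cobarDiff.comp_wordParity_of_odd (by decide)
  have hsq : C.cobarDiff ∘ₗ C.cobarDiff ∘ₗ C.cobarIncl = 0 :=
    comp_comp_eq_zero_of_twisting hD C.wordParity_comp_cobarIncl C.cobarDiff_comp_cobarIncl
  have hdouble : C.cobarDiff ∘ₗ C.cobarDiff + C.cobarDiff ∘ₗ C.cobarDiff = 0 :=
    (hD.anticommutator hD rfl hodd hodd).tensorAlgebra_ext .zero fun v => by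
      have hv := LinearMap.congr_fun hsq (C.reducedIncl v)
      rw [LinearMap.comp_apply, LinearMap.comp_apply, cobarIncl_reducedIncl] at hv
      simp [hv]
  simpa [← two_smul ℚ] using hdouble

theorem algHom_comp_cobarDiff {B : Type*} [Ring B] [Algebra ℚ B] {σ : B →ₐ[ℚ] B} {D : B →ₗ[ℚ] B}
    (hD : IsSkewDerivation σ (.id ℚ B) D) {φ : TensorAlgebra ℚ C.reduced.carrier →ₐ[ℚ] B}
    (hσ : φ.comp (wordParity C.reduced.grading) = σ.comp φ) {τ : C.carrier →ₗ[ℚ] B}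
    (hφ : φ.toLinearMap ∘ₗ C.cobarIncl = τ)
    (hτ : D ∘ₗ τ = -(τ ∘ₗ C.d) - conv (τ ∘ₗ C.parity) τ) :
    φ.toLinearMap ∘ₗ C.cobarDiff = D ∘ₗ φ.toLinearMap := by
  have hcobarIncl :
      φ.toLinearMap ∘ₗ C.cobarDiff ∘ₗ C.cobarIncl = D ∘ₗ φ.toLinearMap ∘ₗ C.cobarIncl := by
    rw [hφ, hτ, cobarDiff_comp_cobarIncl, LinearMap.comp_sub, LinearMap.comp_neg, cobarQuad,
      DGCoalgebra.algHom_comp_conv, ← LinearMap.comp_assoc, ← LinearMap.comp_assoc, hφ]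
  refine (hσ ▸ C.isSkewDerivation_cobarDiff.algHom_comp φ).tensorAlgebra_ext
    (hD.comp_algHom φ) fun v => ?_
  have hv := LinearMap.congr_fun hcobarIncl (C.reducedIncl v)
  simpa [cobarIncl_reducedIncl] using hv

/-- The cobar construction `ΩC`. -/
def cobar : DGAlgebra where
  carrier := TensorAlgebra ℚ C.reduced.carrier
  grading := wordGrading C.reduced.grading
  d := C.cobarDiff
  d_mem _ _ hx := C.hasDegree_cobarDiff.wordGrading_of_wordFil hx
  d_sq := C.cobarDiff_comp_cobarDiff
  mul := LinearMap.mul ℚ _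
  one := 1
  one_mem := SetLike.GradedOne.one_mem
  mul_mem _ _ _ _ hx hy := SetLike.GradedMul.mul_mem hx hy
  mul_assoc' := mul_assoc
  one_mul' := one_mul
  mul_one' := mul_one
  leibniz i x y hx := by
    have hparity : wordParity C.reduced.grading x = (-1 : ℚ) ^ i • x := parityOf_of_mem hx
    simp [C.isSkewDerivation_cobarDiff x y, hparity, add_comm]

/-- The universal twisting chain `t : C ⇝ ΩC`. -/
def cobarTwist : TwistingChain C.toDGCoalgebra C.cobar where
  toFun := C.cobarIncl
  mem _ _ hc := antitone_wordFil _ zero_le_one (cobarIncl_mem hc)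
  twist := by
    change C.cobarDiff ∘ₗ C.cobarIncl + C.cobarIncl ∘ₗ C.d + C.cobarQuad = 0
    rw [cobarDiff_comp_cobarIncl]
    abel

end CoaugDGCoalgebra

end Cobar

section UniversalProperty

namespace DGAlgebra

variable (A : DGAlgebra)

instance : Ring A.carrier where
  __ := A.isAddCommGroup
  mul x y := A.mul x y
  one := A.one
  mul_assoc := A.mul_assoc'
  one_mul := A.one_mul'
  mul_one := A.mul_one'
  left_distrib x := map_add (A.mul x)
  right_distrib := LinearMap.map_add₂ A.mul
  zero_mul := LinearMap.map_zero₂ A.mul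
  mul_zero x := map_zero (A.mul x)

instance : Algebra ℚ A.carrier :=
  .ofModule (LinearMap.map_smul₂ A.mul) fun r x => map_smul (A.mul x) r

instance : GradedAlgebra A.grading where
  one_mem := A.one_mem
  mul_mem _ _ _ _ hx hy := A.mul_mem _ _ _ _ hx hy

theorem isSkewDerivation_d : IsSkewDerivation (parityAlgHom A.grading) (.id ℚ A.carrier) A.d := by
  intro x y
  suffices h : A.d ∘ₗ A.mul.flip y = A.mul.flip (A.d y) ∘ₗ parityOf A.grading +
      A.mul.flip y ∘ₗ A.d from LinearMap.congr_fun h x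
  refine linearMap_ext_homogeneous A.grading fun n x hx => ?_
  simp [parityOf_of_mem hx, A.leibniz n x y hx, add_comm]

end DGAlgebra

theorem TwistingChain.d_comp {C : DGCoalgebra} {A : DGAlgebra} (τ : TwistingChain C A) :
    A.d ∘ₗ τ.toFun = -(τ.toFun ∘ₗ C.d) - conv (τ.toFun ∘ₗ C.parity) τ.toFun := by
  rw [eq_sub_iff_add_eq, eq_neg_iff_add_eq_zero, add_right_comm]
  exact τ.twist

namespace DGAlgebraHom

variable {A B E : DGAlgebra}

theorem ext {F G : DGAlgebraHom A B} (h : F.toLinearMap = G.toLinearMap) : F = G := by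
  cases F; cases G; congr

/-- The identity morphism of a dg algebra. -/
def id (A : DGAlgebra) : DGAlgebraHom A A where
  toLinearMap := .id
  mem _ _ hx := hx
  chain := rfl
  map_one := rfl
  map_mul _ _ := rfl

/-- The composite of two morphisms of dg algebras. -/
def comp (G : DGAlgebraHom B E) (F : DGAlgebraHom A B) : DGAlgebraHom A E where
  toLinearMap := G.toLinearMap ∘ₗ F.toLinearMap
  mem n x hx := G.mem n _ (F.mem n x hx)
  chain := by
    rw [LinearMap.comp_assoc, F.chain, ← LinearMap.comp_assoc, G.chain, LinearMap.comp_assoc]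
  map_one := by simp [F.map_one, G.map_one]
  map_mul x y := by simp [F.map_mul, G.map_mul]

end DGAlgebraHom

namespace CoaugDGCoalgebra

variable {C : CoaugDGCoalgebra} {A : DGAlgebra}

theorem cobar_hom_ext {F G : DGAlgebraHom C.cobar A}
    (h : F.toLinearMap ∘ₗ C.cobarIncl = G.toLinearMap ∘ₗ C.cobarIncl) : F = G := by
  let algHom (H : DGAlgebraHom C.cobar A) : TensorAlgebra ℚ C.reduced.carrier →ₐ[ℚ] A.carrier :=
    .ofLinearMap H.toLinearMap H.map_one H.map_mul
  have hFG : algHom F = algHom G := TensorAlgebra.hom_ext <| LinearMap.ext fun v => by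
    have hv : F.toLinearMap (C.cobarIncl (C.reducedIncl v)) =
        G.toLinearMap (C.cobarIncl (C.reducedIncl v)) := LinearMap.congr_fun h _
    rwa [cobarIncl_reducedIncl] at hv
  exact DGAlgebraHom.ext (congrArg AlgHom.toLinearMap hFG)

theorem lift_comp_cobarIncl {B : Type*} [Ring B] [Algebra ℚ B] {τ : C.carrier →ₗ[ℚ] B}
    (hτ : τ C.one = 0) :
    (TensorAlgebra.lift ℚ (τ ∘ₗ C.reducedIncl)).toLinearMap ∘ₗ C.cobarIncl = τ :=
  LinearMap.ext fun c => by simp [cobarIncl, C.reducedIncl_reducedProj, hτ]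

/-- The dg algebra map `ΩC → A` corresponding to a twisting chain `C ⇝ A`. -/
def cobarLift (τ : TwistingChain C.toDGCoalgebra A) (hτ : τ.toFun C.one = 0) :
    DGAlgebraHom C.cobar A :=
  let φ := TensorAlgebra.lift ℚ (τ.toFun ∘ₗ C.reducedIncl)
  have hdeg : HasDegree (wordGrading C.reduced.grading) A.grading 0 φ.toLinearMap :=
    hasDegree_wordGrading_lift fun n v hv => by
      have hv := τ.mem _ _ hv
      rwa [add_sub_cancel_right] at hv
  { toLinearMap := φ.toLinearMap
    mem := fun _ _ hx => hdeg.mem hx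
    chain := C.algHom_comp_cobarDiff A.isSkewDerivation_d
      (AlgHom.toLinearMap_injective (hdeg.comp_parityOf_of_even .zero))
      (lift_comp_cobarIncl hτ) τ.d_comp
    map_one := map_one φ
    map_mul := map_mul φ }

theorem cobarLift_comp_cobarIncl (τ : TwistingChain C.toDGCoalgebra A) (hτ : τ.toFun C.one = 0) :
    (cobarLift τ hτ).toLinearMap ∘ₗ C.cobarIncl = τ.toFun :=
  lift_comp_cobarIncl hτ

variable (C) in
/-- The cobar construction on the tensor algebra `T(C̄[1])` has the universal property. -/
def cobarData : CobarData C where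
  alg := C.cobar
  t := C.cobarTwist
  t_one := C.cobarIncl_one
  univ _ τ hτ := ⟨cobarLift τ hτ, cobarLift_comp_cobarIncl τ hτ, fun _ hF =>
    cobar_hom_ext (hF.trans (cobarLift_comp_cobarIncl τ hτ).symm)⟩

end CoaugDGCoalgebra

end UniversalProperty

section Functoriality

/-- The composite `C ⇝ A → B` of a twisting chain with a morphism of dg algebras. -/
def TwistingChain.map {C : DGCoalgebra} {A B : DGAlgebra} (F : DGAlgebraHom A B)
    (τ : TwistingChain C A) : TwistingChain C B where
  toFun := F.toLinearMap ∘ₗ τ.toFun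
  mem n c hc := F.mem _ _ (τ.mem n c hc)
  twist := by
    let φ : A.carrier →ₐ[ℚ] B.carrier := .ofLinearMap F.toLinearMap F.map_one F.map_mul
    have hconv : F.toLinearMap ∘ₗ conv (τ.toFun ∘ₗ C.parity) τ.toFun =
        conv ((F.toLinearMap ∘ₗ τ.toFun) ∘ₗ C.parity) (F.toLinearMap ∘ₗ τ.toFun) :=
      DGCoalgebra.algHom_comp_conv φ _ _
    change _ + _ + conv ((F.toLinearMap ∘ₗ τ.toFun) ∘ₗ C.parity) (F.toLinearMap ∘ₗ τ.toFun) = 0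
    rw [← hconv, ← LinearMap.comp_assoc, ← F.chain, LinearMap.comp_assoc, LinearMap.comp_assoc,
      τ.d_comp, LinearMap.comp_sub, LinearMap.comp_neg]
    abel

namespace CobarData

variable {C D : CoaugDGCoalgebra}

theorem hom_ext (Ω : CobarData C) {A : DGAlgebra} {F G : DGAlgebraHom Ω.alg A}
    (h : F.toLinearMap ∘ₗ Ω.t.toFun = G.toLinearMap ∘ₗ Ω.t.toFun) : F = G :=
  (Ω.univ A (Ω.t.map F) (by simp [TwistingChain.map, Ω.t_one])).unique rfl h.symm

theorem exists_comparison (Ω Ω' : CobarData C) : ∃ (i : DGAlgebraHom Ω.alg Ω'.alg)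
    (r : DGAlgebraHom Ω'.alg Ω.alg), r.comp i = .id Ω.alg ∧
      i.toLinearMap ∘ₗ Ω.t.toFun = Ω'.t.toFun ∧ r.toLinearMap ∘ₗ Ω'.t.toFun = Ω.t.toFun := by
  obtain ⟨i, hi, -⟩ := Ω.univ Ω'.alg Ω'.t Ω'.t_one
  obtain ⟨r, hr, -⟩ := Ω'.univ Ω.alg Ω.t Ω.t_one
  refine ⟨i, r, Ω.hom_ext ?_, hi, hr⟩
  change (r.toLinearMap ∘ₗ i.toLinearMap) ∘ₗ Ω.t.toFun = Ω.t.toFun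
  rw [LinearMap.comp_assoc, hi, hr]

theorem isQuasiIso_transfer {Ω Ω' : CobarData C} {Λ Λ' : CobarData D}
    {g : C.carrier →ₗ[ℚ] D.carrier} {F : DGAlgebraHom Ω.alg Λ.alg}
    {F' : DGAlgebraHom Ω'.alg Λ'.alg} (hF : F.toLinearMap ∘ₗ Ω.t.toFun = Λ.t.toFun ∘ₗ g)
    (hF' : F'.toLinearMap ∘ₗ Ω'.t.toFun = Λ'.t.toFun ∘ₗ g)
    (h : IsQuasiIso Ω'.alg.d Λ'.alg.d F'.toLinearMap) :
    IsQuasiIso Ω.alg.d Λ.alg.d F.toLinearMap := by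
  obtain ⟨i, r, hri, hi, hr⟩ := Ω.exists_comparison Ω'
  obtain ⟨j, s, hsj, hj, hs⟩ := Λ.exists_comparison Λ'
  have hsquare : F'.comp i = j.comp F := Ω.hom_ext <| by
    simp only [DGAlgebraHom.comp, LinearMap.comp_assoc, hi, hF, hF']
    rw [← LinearMap.comp_assoc, hj]
  have hsquare' : s.comp F' = F.comp r := Ω'.hom_ext <| by
    simp only [DGAlgebraHom.comp, LinearMap.comp_assoc, hr, hF, hF']
    rw [← LinearMap.comp_assoc, hs]
  exact h.of_retract (congrArg (·.toLinearMap) hri) (congrArg (·.toLinearMap) hsj)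
    i.chain r.chain j.chain s.chain (congrArg (·.toLinearMap) hsquare)
    (congrArg (·.toLinearMap) hsquare')

end CobarData

namespace CoaugCoalgebraHom

variable {C D : CoaugDGCoalgebra} (ψ : CoaugCoalgebraHom C D)

theorem comp_parity : ψ.toLinearMap ∘ₗ C.parity = D.parity ∘ₗ ψ.toLinearMap := by
  have hdeg : HasDegree C.grading D.grading 0 ψ.toLinearMap := fun n c hc => by
    simpa using ψ.mem n c hc
  exact hdeg.comp_parityOf_of_even .zero

theorem tensorAlgebraMap_comp_cobarIncl :
    (tensorAlgebraMap ψ.reducedMap).toLinearMap ∘ₗ C.cobarIncl = D.cobarIncl ∘ₗ ψ.toLinearMap :=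
  LinearMap.ext fun c => by
    have hc := LinearMap.congr_fun ψ.reducedMap_comp_reducedProj c
    simp_all [CoaugDGCoalgebra.cobarIncl, tensorAlgebraMap]

theorem conv_comp {B : Type*} [Ring B] [Algebra ℚ B] (f g : D.carrier →ₗ[ℚ] B) :
    conv f g ∘ₗ ψ.toLinearMap = conv (f ∘ₗ ψ.toLinearMap) (g ∘ₗ ψ.toLinearMap) := by
  simp only [conv, LinearMap.comp_assoc, ← ψ.comul_comp, TensorProduct.map_comp]

theorem cobarDiff_comp_cobarIncl_comp : D.cobarDiff ∘ₗ D.cobarIncl ∘ₗ ψ.toLinearMap =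
    -((D.cobarIncl ∘ₗ ψ.toLinearMap) ∘ₗ C.d) -
      conv ((D.cobarIncl ∘ₗ ψ.toLinearMap) ∘ₗ C.parity) (D.cobarIncl ∘ₗ ψ.toLinearMap) := by
  simp only [← LinearMap.comp_assoc, D.cobarDiff_comp_cobarIncl, LinearMap.sub_comp,
    LinearMap.neg_comp, CoaugDGCoalgebra.cobarQuad, conv_comp]
  simp only [LinearMap.comp_assoc, ψ.comp_parity, ψ.chain]

/-- The dg algebra map `Ωψ : ΩC → ΩD`, determined by `tc ↦ t(ψc)`. -/
def cobarMap : DGAlgebraHom C.cobar D.cobar :=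
  let φ := tensorAlgebraMap ψ.reducedMap
  have hdeg := hasDegree_tensorAlgebraMap ψ.hasDegree_reducedMap
  { toLinearMap := φ.toLinearMap
    mem := fun _ _ hx => hdeg.wordGrading_of_wordFil.mem hx
    chain := C.algHom_comp_cobarDiff D.isSkewDerivation_cobarDiff
      (AlgHom.toLinearMap_injective (hdeg.comp_wordParity_of_even .zero))
      ψ.tensorAlgebraMap_comp_cobarIncl ψ.cobarDiff_comp_cobarIncl_comp
    map_one := _root_.map_one φ
    map_mul := map_mul φ }

theorem cobarMap_comp_cobarIncl :
    ψ.cobarMap.toLinearMap ∘ₗ C.cobarIncl = D.cobarIncl ∘ₗ ψ.toLinearMap :=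
  ψ.tensorAlgebraMap_comp_cobarIncl

theorem isQuasiIso_cobarMap (hC : C.TwoReduced) (hD : D.TwoReduced)
    (hψ : IsQuasiIso C.d D.d ψ.toLinearMap) :
    IsQuasiIso C.cobar.d D.cobar.d ψ.cobarMap.toLinearMap :=
  isQuasiIso_tensorAlgebraMap hC.reduced_grading_eq_bot hD.reduced_grading_eq_bot
    (ψ.isQuasiIso_reducedMap hψ) ψ.hasDegree_reducedMap ψ.reducedMap_comp_d
    C.cobarDiff_comp_cobarDiff D.cobarDiff_comp_cobarDiff
    C.hasDegree_cobarDiff_sub_freeDiff D.hasDegree_cobarDiff_sub_freeDiff ψ.cobarMap.chain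

end CoaugCoalgebraHom

end Functoriality

/-- If `ψ : C → D` is a quasi-isomorphism of 2-reduced dg coalgebras,
then the induced morphism of cobar constructions `Ωψ : ΩC → ΩD` (the unique dg algebra
map with `Ωψ ∘ t_C = t_D ∘ ψ`) is a quasi-isomorphism of dg algebras. -/
theorem cobar_of_quasiIso_is_quasiIso (C D : CoaugDGCoalgebra)
    (hC : C.TwoReduced) (hD : D.TwoReduced) (ψ : CoaugCoalgebraHom C D)
    (hψ : IsQuasiIso C.d D.d ψ.toLinearMap)
    (ΩC : CobarData C) (ΩD : CobarData D)
    (F : DGAlgebraHom ΩC.alg ΩD.alg)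
    (hF : F.toLinearMap.comp ΩC.t.toFun = ΩD.t.toFun.comp ψ.toLinearMap) :
    IsQuasiIso ΩC.alg.d ΩD.alg.d F.toLinearMap := by
  have hΩψ := ψ.isQuasiIso_cobarMap hC hD hψ
  exact CobarData.isQuasiIso_transfer (Ω' := C.cobarData) (Λ' := D.cobarData) hF
    ψ.cobarMap_comp_cobarIncl hΩψ

end
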